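/- arXiv:0909.3287 — 3 statements merged into one kernel-verified Lean document; each statement's English description precedes it below -/
import Mathlib

section
/- Let n ≥ 1 and K > 0. There exists a constant c > 0, depending only on n and K, with the following property. Let R > 0, let φ : ℝ → ℝ be smooth with sup|φ'| + sup|φ''| ≤ K, let σ ≥ cR², and let g : ℝⁿ × ℝ → ℂ be smooth and compactly supported, with support contained in the set {(x,t) : |x/R + φ(t)e₁| ≥ 1}, where e₁ is the first standard basis vector of ℝⁿ. Then (σ^{3/2}/R²) ‖e^{σ|x/R + φ(t)e₁|²} g‖_{L²(ℝⁿ×ℝ, dx dt)} ≤ c ‖e^{σ|x/R + φ(t)e₁|²} (i∂ₜg + Δg)‖_{L²(ℝⁿ×ℝ, dx dt)}. -/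
open MeasureTheory Complex Filter Set
open scoped ENNReal

/-- The Laplacian in the spatial variables, via the second iterated Fréchet derivative. -/
noncomputable def spatialLaplacian {n : ℕ} (f : EuclideanSpace ℝ (Fin n) → ℂ)
    (x : EuclideanSpace ℝ (Fin n)) : ℂ :=
  ∑ i : Fin n, iteratedFDeriv ℝ 2 f x ![EuclideanSpace.single i 1, EuclideanSpace.single i 1]

/-!
Write `y = x / R + p(t)`. Conjugating by the weight `exp (σ |y|²)` turns `-i∂ⱼ` into `-i∂ⱼ + i Bⱼ`
with `Bⱼ = (2σ / R) yⱼ`, but since the weight moves, `∂ₜ` contributes an error as well. This error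
is absorbed by a Galilean change of frame: for the spatially constant vector potential
`a = (R / 2) p'`, the kinetic momenta `Πⱼ = -i∂ⱼ + aⱼ` satisfy `i∂ₜ + Δ = L - ∑ⱼ Πⱼ²`, where `L`, up
to a multiplication operator, differentiates along the worldlines of the moving centre and therefore
commutes with every function of `y`. The conjugated operator is then
`L - ∑ⱼ (Πⱼ + i Bⱼ)² = S - i C` with symmetric `S = L - ∑ⱼ (Πⱼ² - Bⱼ²)` and
`C = ∑ⱼ (Πⱼ Bⱼ + Bⱼ Πⱼ)`. Hence `‖(S - i C) u‖² ≥ ⟪u, -i [S, C] u⟫`, and the commutator is explicit: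
`-i [S, C] = (8σ / R²) ∑ⱼ Πⱼ² + (32σ³ / R⁴) |y|² + 2σ ⟪y, p''⟫`. On the support of `u`, where
`|y| ≥ 1`, the last term is dominated by the second one as soon as `σ` is large compared to `R²`.
-/

open scoped ContDiff ComplexConjugate Distributions Laplacian

attribute [local instance] LieRing.ofAssociativeRing

section CommutatorIdentities

variable {A : Type*} [Ring A]

theorem lie_mul (x a b : A) : ⁅x, a * b⁆ = ⁅x, a⁆ * b + a * ⁅x, b⁆ := by
  simp only [Ring.lie_def]; noncomm_ring

theorem mul_lie (a b x : A) : ⁅a * b, x⁆ = a * ⁅b, x⁆ + ⁅a, x⁆ * b := by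
  simp only [Ring.lie_def]; noncomm_ring

theorem lie_add_sq_sub_sq {p g x : A} (hpg : Commute p g) (hgx : Commute g x) :
    ⁅(p + g) ^ 2 - p ^ 2, x⁆ = 2 • (g * ⁅p, x⁆) := by
  have expand : (p + g) ^ 2 - p ^ 2 = 2 • (g * p) + g * g := by
    simp only [sq, add_mul, mul_add, hpg.eq, two_nsmul]; abel
  rw [expand, add_lie, nsmul_lie, mul_lie, mul_lie, commute_iff_lie_eq.1 hgx]
  simp

theorem lie_anticommutator {l p b : A} (hlb : Commute l b) (hlpb : Commute ⁅l, p⁆ b) :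
    ⁅l, p * b + b * p⁆ = 2 • (b * ⁅l, p⁆) := by
  rw [lie_add, lie_mul, lie_mul, commute_iff_lie_eq.1 hlb, hlpb.eq]
  simp [two_mul]

theorem commute_sq_sub_sq_anticommutator {p b q c : A} (hpq : Commute p q) (hpc : Commute p c)
    (hbq : Commute b q) (hbc : Commute b c) : Commute (p ^ 2 - b ^ 2) (q * c + c * q) :=
  have hp : Commute p (q * c + c * q) := (hpq.mul_right hpc).add_right (hpc.mul_right hpq)
  have hb : Commute b (q * c + c * q) := (hbq.mul_right hbc).add_right (hbc.mul_right hbq)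
  (hp.pow_left 2).sub_left (hb.pow_left 2)

variable {R : Type*} [CommRing R] [Algebra R A]

theorem lie_sq_sub_sq_anticommutator {p b : A} {c : R} (hpb : ⁅p, b⁆ = c • 1) :
    ⁅p ^ 2 - b ^ 2, p * b + b * p⁆ = (4 * c) • (p ^ 2 + b ^ 2) := by
  have hbp : ⁅b, p⁆ = -(c • 1) := by rw [← hpb, lie_skew]
  have hp : ⁅p ^ 2, p * b + b * p⁆ = (4 * c) • p ^ 2 := by
    simp only [sq, mul_lie, lie_add, lie_mul, lie_self, hpb, zero_mul, mul_zero, zero_add, add_zero,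
      smul_mul_assoc, mul_smul_comm, one_mul, mul_one, mul_add, add_mul]
    module
  have hb : ⁅b ^ 2, p * b + b * p⁆ = -((4 * c) • b ^ 2) := by
    simp only [sq, mul_lie, lie_add, lie_mul, lie_self, hbp, zero_mul, mul_zero, zero_add, add_zero,
      neg_mul, mul_neg, smul_mul_assoc, mul_smul_comm, one_mul, mul_one, mul_add, add_mul]
    module
  rw [sub_lie, hp, hb, sub_neg_eq_add, smul_add]

variable {ι : Type*} [Fintype ι]

theorem lie_sub_sum_sq_sub_sq_anticommutator [DecidableEq ι] {l : A} {p b : ι → A} {c : R}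
    (hlb : ∀ i, Commute l (b i)) (hlpb : ∀ i, Commute ⁅l, p i⁆ (b i))
    (hpp : ∀ i j, Commute (p i) (p j)) (hbb : ∀ i j, Commute (b i) (b j))
    (hpb : ∀ i j, ⁅p i, b j⁆ = if i = j then c • 1 else 0) :
    ⁅l - ∑ i, (p i ^ 2 - b i ^ 2), ∑ i, (p i * b i + b i * p i)⁆
      = ∑ i, (2 • (b i * ⁅l, p i⁆) - (4 * c) • (p i ^ 2 + b i ^ 2)) := by
  have off_diagonal : ∀ i j, i ≠ j → Commute (p i) (b j) := fun i j hij => by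
    rw [commute_iff_lie_eq, hpb, if_neg hij]
  have pairwise : ∀ i j, ⁅p i ^ 2 - b i ^ 2, p j * b j + b j * p j⁆
      = if i = j then (4 * c) • (p j ^ 2 + b j ^ 2) else 0 := by
    intro i j
    split_ifs with hij
    · subst hij
      exact lie_sq_sub_sq_anticommutator (by rw [hpb, if_pos rfl])
    · exact commute_iff_lie_eq.1 <| commute_sq_sub_sq_anticommutator (hpp i j)
        (off_diagonal i j hij) (off_diagonal j i (Ne.symm hij)).symm (hbb i j)
  rw [lie_sum]
  refine Finset.sum_congr rfl fun j _ => ?_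
  rw [sub_lie, sum_lie, lie_anticommutator (hlb j) (hlpb j)]
  simp only [pairwise, Finset.sum_ite_eq', Finset.mem_univ, if_true]

theorem sub_sum_add_I_smul_sq {A : Type*} [Ring A] [Algebra ℂ A] (l : A) (p b : ι → A) :
    l - ∑ i, (p i + I • b i) ^ 2
      = (l - ∑ i, (p i ^ 2 - b i ^ 2)) - I • ∑ i, (p i * b i + b i * p i) := by
  have expand : ∀ i, (p i + I • b i) ^ 2 = (p i ^ 2 - b i ^ 2) + I • (p i * b i + b i * p i) := by
    intro i
    simp only [sq, add_mul, mul_add, smul_mul_assoc, mul_smul_comm, smul_add, smul_smul, I_mul_I]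
    module
  simp only [expand, Finset.sum_add_distrib (f := fun i => p i ^ 2 - b i ^ 2), ← Finset.smul_sum]
  abel

end CommutatorIdentities

section SymmetricOperators

variable {H : Type*} [SeminormedAddCommGroup H] [InnerProductSpace ℂ H]

theorem re_inner_lie_le_norm_sub_I_smul_sq {S C : Module.End ℂ H} (hS : S.IsSymmetric)
    (hC : C.IsSymmetric) (u : H) :
    (inner ℂ u (-I • ⁅S, C⁆ u)).re ≤ ‖(S - I • C) u‖ ^ 2 := by
  have swap : inner ℂ u (⁅S, C⁆ u) = inner ℂ (S u) (C u) - inner ℂ (C u) (S u) := by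
    rw [hS, hC, Ring.lie_def, LinearMap.sub_apply, inner_sub_right]; rfl
  have cross : (inner ℂ u (-I • ⁅S, C⁆ u)).re = -2 * (inner ℂ (S u) (I • C u)).re := by
    rw [inner_smul_right, inner_smul_right, swap]
    simp only [neg_mul, neg_re, I_mul_re, sub_im, neg_neg]
    linarith [conj_im (inner ℂ (C u) (S u)), congrArg im (inner_conj_symm (S u) (C u))]
  rw [cross, LinearMap.sub_apply, LinearMap.smul_apply, @norm_sub_sq ℂ, RCLike.re_eq_complex_re]
  linarith [sq_nonneg ‖S u‖, sq_nonneg ‖I • C u‖]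

theorem isSymmetric_anticommutator {S T : Module.End ℂ H} (hS : S.IsSymmetric)
    (hT : T.IsSymmetric) : (S * T + T * S).IsSymmetric := fun u v => by
  simp [inner_add_left, inner_add_right, hS _, hT _, add_comm]

theorem inner_sq_apply_self {S : Module.End ℂ H} (hS : S.IsSymmetric) (u : H) :
    inner ℂ u ((S ^ 2) u) = ((‖S u‖ ^ 2 : ℝ) : ℂ) := by
  rw [sq, Module.End.mul_apply, ← hS, inner_self_eq_norm_sq_to_K]
  simp

theorem inner_sum_sq_add_mul_le {ι : Type*} [Fintype ι] [DecidableEq ι] {L : Module.End ℂ H}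
    {P B F : ι → Module.End ℂ H} {h : ℝ} (hh : 0 ≤ h) (hL : L.IsSymmetric)
    (hP : ∀ i, (P i).IsSymmetric) (hB : ∀ i, (B i).IsSymmetric)
    (hLB : ∀ i, Commute L (B i)) (hLP : ∀ i, ⁅L, P i⁆ = I • F i)
    (hFB : ∀ i, Commute (F i) (B i))
    (hPP : ∀ i j, Commute (P i) (P j)) (hBB : ∀ i j, Commute (B i) (B j))
    (hPB : ∀ i j, ⁅P i, B j⁆ = if i = j then (-I * h : ℂ) • 1 else 0) (u : H) :
    (inner ℂ u ((∑ i, ((4 * h : ℂ) • B i ^ 2 + (2 : ℂ) • (B i * F i))) u)).re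
      ≤ ‖(L - ∑ i, (P i + I • B i) ^ 2) u‖ ^ 2 := by
  have commutator : -I • ⁅L - ∑ i, (P i ^ 2 - B i ^ 2), ∑ i, (P i * B i + B i * P i)⁆
      = ((4 * h : ℝ) : ℂ) • ∑ i, P i ^ 2
        + ∑ i, ((4 * h : ℂ) • B i ^ 2 + (2 : ℂ) • (B i * F i)) := by
    rw [lie_sub_sum_sq_sub_sq_anticommutator hLB (fun i => by rw [hLP]; exact (hFB i).smul_left I)
      hPP hBB hPB, Finset.smul_sum, Finset.smul_sum, ← Finset.sum_add_distrib]
    refine Finset.sum_congr rfl fun i _ => ?_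
    rw [hLP, mul_smul_comm]
    match_scalars <;> ring_nf <;> rw [I_sq] <;> ring
  have hS : (L - ∑ i, (P i ^ 2 - B i ^ 2)).IsSymmetric :=
    hL.sub (LinearMap.isSymmetric_sum _ fun i _ => ((hP i).pow 2).sub ((hB i).pow 2))
  have hC : (∑ i, (P i * B i + B i * P i)).IsSymmetric :=
    LinearMap.isSymmetric_sum _ fun i _ => isSymmetric_anticommutator (hP i) (hB i)
  have kinetic : 0 ≤ (inner ℂ u ((((4 * h : ℝ) : ℂ) • ∑ i, P i ^ 2) u)).re := by
    simp only [LinearMap.smul_apply, LinearMap.sum_apply, inner_smul_right, inner_sum,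
      inner_sq_apply_self (hP _), ← ofReal_sum, ← ofReal_mul, ofReal_re]
    positivity
  have bound := re_inner_lie_le_norm_sub_I_smul_sq hS hC u
  rw [← LinearMap.smul_apply, commutator, LinearMap.add_apply, inner_add_right, add_re,
    ← sub_sum_add_I_smul_sq] at bound
  linarith

end SymmetricOperators

theorem fderiv_fderiv_apply {E F : Type*} [NormedAddCommGroup E] [NormedSpace ℝ E]
    [NormedAddCommGroup F] [NormedSpace ℝ F] {f : E → F} (hf : ContDiff ℝ 2 f) (x v w : E) :
    fderiv ℝ (fun y => fderiv ℝ f y w) x v = fderiv ℝ (fderiv ℝ f) x v w := by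
  have hd : DifferentiableAt ℝ (fderiv ℝ f) x :=
    (hf.fderiv_right (m := 1) (by norm_num)).differentiable (by simp) x
  simp [fderiv_clm_apply hd (differentiableAt_const w)]

section TestFunctions

variable {X : Type*} [NormedAddCommGroup X] [NormedSpace ℝ X] [MeasurableSpace X]

/-- Complex test functions on the whole of `X`, to be given the inner product of `L²(μ)`.
It is a type synonym because `𝓓(⊤, ℂ)` already carries a different topology. -/
def L2TestFunction (_μ : Measure X) : Type _ := 𝓓((⊤ : TopologicalSpace.Opens X), ℂ)

namespace L2TestFunction

variable {μ : Measure X}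

noncomputable instance : AddCommGroup (L2TestFunction μ) :=
  inferInstanceAs (AddCommGroup 𝓓((⊤ : TopologicalSpace.Opens X), ℂ))

noncomputable instance : Module ℂ (L2TestFunction μ) :=
  inferInstanceAs (Module ℂ 𝓓((⊤ : TopologicalSpace.Opens X), ℂ))

instance : TestFunctionClass (L2TestFunction μ) (⊤ : TopologicalSpace.Opens X) ℂ ⊤ :=
  inferInstanceAs (TestFunctionClass 𝓓((⊤ : TopologicalSpace.Opens X), ℂ) _ ℂ ⊤)

instance : IsAddApply (L2TestFunction μ) X ℂ := ⟨fun _ _ _ => rfl⟩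
instance : IsZeroApply (L2TestFunction μ) X ℂ := ⟨fun _ => rfl⟩
instance : IsNegApply (L2TestFunction μ) X ℂ := ⟨fun _ _ => rfl⟩
instance : IsSubApply (L2TestFunction μ) X ℂ := ⟨fun _ _ _ => rfl⟩
instance : IsSMulApply ℂ (L2TestFunction μ) X ℂ := ⟨fun _ _ _ => rfl⟩

variable (μ) in
/-- A smooth compactly supported function, bundled as an element of `L2TestFunction μ`. -/
def of (f : X → ℂ) (hf : ContDiff ℝ ∞ f) (hfc : HasCompactSupport f) : L2TestFunction μ :=
  (⟨f, hf, hfc, fun _ _ => trivial⟩ : 𝓓((⊤ : TopologicalSpace.Opens X), ℂ))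

@[simp]
theorem of_apply (f : X → ℂ) (hf : ContDiff ℝ ∞ f) (hfc : HasCompactSupport f) (z : X) :
    of μ f hf hfc z = f z := rfl

@[ext]
theorem ext {u w : L2TestFunction μ} (h : ∀ z, u z = w z) : u = w := DFunLike.ext u w h

theorem contDiff (u : L2TestFunction μ) : ContDiff ℝ ∞ u := TestFunctionClass.map_contDiff u

theorem hasCompactSupport (u : L2TestFunction μ) : HasCompactSupport u :=
  TestFunctionClass.map_hasCompactSupport u

theorem differentiable (u : L2TestFunction μ) : Differentiable ℝ u :=
  u.contDiff.differentiable (by simp)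

variable (μ) in
/-- The quantum-mechanical momentum operator `-i∂_v`. -/
noncomputable def momentum (v : X) : Module.End ℂ (L2TestFunction μ) where
  toFun u := of μ (fun z => -I * fderiv ℝ u z v)
    (contDiff_const.mul ((u.contDiff.fderiv_right (by simp)).clm_apply contDiff_const))
    (u.hasCompactSupport.fderiv_apply ℝ v).mul_left
  map_add' u w := by
    ext z
    simp [fderiv_add (u.differentiable z) (w.differentiable z), mul_add, add_comm]
  map_smul' c u := by
    ext z
    simp only [FunLike.coe_smul, of_apply, fderiv_const_smul (u.differentiable z) c, smul_apply,
      smul_eq_mul, RingHom.id_apply]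
    ring

variable (μ) in
/-- Multiplication by a smooth real function. -/
noncomputable def mulOp (b : X → ℝ) (hb : ContDiff ℝ ∞ b) : Module.End ℂ (L2TestFunction μ) where
  toFun u := of μ (fun z => b z • u z) (hb.smul u.contDiff)
    (u.hasCompactSupport.smul_left (f := b))
  map_add' u w := by ext z; simp
  map_smul' c u := by ext z; simp [mul_left_comm]

@[simp]
theorem momentum_apply (v : X) (u : L2TestFunction μ) (z : X) :
    momentum μ v u z = -I * fderiv ℝ u z v := rfl

@[simp]
theorem mulOp_apply (b : X → ℝ) (hb : ContDiff ℝ ∞ b) (u : L2TestFunction μ) (z : X) :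
    mulOp μ b hb u z = b z • u z := rfl

theorem commute_mulOp {b c : X → ℝ} (hb : ContDiff ℝ ∞ b) (hc : ContDiff ℝ ∞ c) :
    Commute (mulOp μ b hb) (mulOp μ c hc) := by
  ext u z
  simp [mul_left_comm]

theorem momentum_mul_momentum_apply (v w : X) (u : L2TestFunction μ) (z : X) :
    (momentum μ v * momentum μ w) u z = -fderiv ℝ (fderiv ℝ u) z v w := by
  have hd : DifferentiableAt ℝ (fun y => fderiv ℝ u y w) z :=
    ((u.contDiff.fderiv_right (m := ∞) (by simp)).clm_apply contDiff_const).differentiable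
      (by simp) z
  rw [← fderiv_fderiv_apply (u.contDiff.of_le (by norm_cast)), Module.End.mul_apply,
    momentum_apply]
  change -I * fderiv ℝ (fun y => -I * fderiv ℝ u y w) z v = _
  rw [fderiv_const_mul hd, smul_apply, smul_eq_mul, ← mul_assoc, neg_mul_neg,
    I_mul_I, neg_one_mul]

theorem commute_momentum (v w : X) :
    Commute (momentum μ v) (momentum μ w) := by
  ext u z
  rw [momentum_mul_momentum_apply, momentum_mul_momentum_apply,
    (u.contDiff.contDiffAt.isSymmSndFDerivAt (by simpa using ENat.LEInfty.out)).eq]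

theorem lie_momentum_mulOp {v : X} {b c : X → ℝ} (hb : ContDiff ℝ ∞ b) (hc : ContDiff ℝ ∞ c)
    (hbc : ∀ z, fderiv ℝ b z v = c z) :
    ⁅momentum μ v, mulOp μ b hb⁆ = -I • mulOp μ c hc := by
  ext u z
  have leibniz := ((ofRealCLM.hasFDerivAt.comp z (hb.differentiable (by simp) z).hasFDerivAt).mul
    (u.differentiable z).hasFDerivAt).fderiv
  replace leibniz : fderiv ℝ (mulOp μ b hb u) z v = b z * fderiv ℝ u z v + c z * u z := by
    rw [← hbc]
    exact (DFunLike.congr_fun leibniz v).trans (by simp [mul_comm])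
  rw [Ring.lie_def, LinearMap.sub_apply, sub_apply, Module.End.mul_apply, Module.End.mul_apply,
    momentum_apply, leibniz]
  simp only [neg_mul, mulOp_apply, momentum_apply, smul_neg, real_smul, sub_neg_eq_add, neg_smul,
    LinearMap.neg_apply, LinearMap.smul_apply, neg_apply, smul_apply, smul_eq_mul]
  ring

theorem commute_momentum_mulOp {v : X} {b : X → ℝ} (hb : ContDiff ℝ ∞ b)
    (hbv : ∀ z, fderiv ℝ b z v = 0) : Commute (momentum μ v) (mulOp μ b hb) := by
  rw [commute_iff_lie_eq, lie_momentum_mulOp hb contDiff_const hbv]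
  ext u z
  simp

section L2

variable [BorelSpace X] [IsFiniteMeasureOnCompacts μ]

theorem memLp (u : L2TestFunction μ) : MemLp u 2 μ :=
  u.contDiff.continuous.memLp_of_hasCompactSupport u.hasCompactSupport

variable (μ) in
/-- The inclusion of the test functions in `L²(μ)`. -/
noncomputable def toLp : L2TestFunction μ →ₗ[ℂ] Lp ℂ 2 μ where
  toFun u := u.memLp.toLp
  map_add' _ _ := rfl
  map_smul' _ _ := rfl

noncomputable instance : SeminormedAddCommGroup (L2TestFunction μ) := .induced _ _ (toLp μ)

noncomputable instance : InnerProductSpace ℂ (L2TestFunction μ) := .induced (toLp μ)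

theorem ofReal_norm_eq_eLpNorm (u : L2TestFunction μ) : ENNReal.ofReal ‖u‖ = eLpNorm u 2 μ := by
  rw [show ‖u‖ = (eLpNorm u 2 μ).toReal from Lp.norm_toLp u u.memLp,
    ENNReal.ofReal_toReal u.memLp.eLpNorm_ne_top]

theorem inner_eq_integral (u w : L2TestFunction μ) : inner ℂ u w = ∫ z, conj (u z) * w z ∂μ := by
  refine (L2.inner_def (toLp μ u) (toLp μ w)).trans (integral_congr_ae ?_)
  filter_upwards [u.memLp.coeFn_toLp, w.memLp.coeFn_toLp] with z hu hw
  rw [show toLp μ u z = u z from hu, show toLp μ w z = w z from hw, RCLike.inner_apply']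

theorem integrable_conj_mul (u w : L2TestFunction μ) : Integrable (fun z => conj (u z) * w z) μ :=
  ((continuous_conj.comp u.contDiff.continuous).mul
    w.contDiff.continuous).integrable_of_hasCompactSupport w.hasCompactSupport.mul_left

theorem isSymmetric_mulOp (b : X → ℝ) (hb : ContDiff ℝ ∞ b) :
    (mulOp μ b hb).IsSymmetric := fun u w => by
  simp only [inner_eq_integral, mulOp_apply, real_smul, map_mul, conj_ofReal, mul_assoc,
    mul_left_comm]

theorem mul_norm_sq_le_re_inner_mulOp {b : X → ℝ} (hb : ContDiff ℝ ∞ b) {m : ℝ}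
    {u : L2TestFunction μ} (hm : ∀ z, u z ≠ 0 → m ≤ b z) :
    m * ‖u‖ ^ 2 ≤ (inner ℂ u (mulOp μ b hb u)).re := by
  have pointwise : ∀ z, conj (u z) * (mulOp μ b hb u - (m : ℂ) • u) z
      = (((b z - m) * ‖u z‖ ^ 2 : ℝ) : ℂ) := fun z => by
    simp only [sub_apply, smul_apply, mulOp_apply, real_smul, smul_eq_mul]
    push_cast
    rw [← conj_mul' (u z)]
    ring
  have nonneg : 0 ≤ (inner ℂ u (mulOp μ b hb u - (m : ℂ) • u)).re := by
    rw [inner_eq_integral, integral_congr_ae (.of_forall pointwise), integral_complex_ofReal,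
      ofReal_re]
    refine integral_nonneg fun z => ?_
    rcases eq_or_ne (u z) 0 with hz | hz
    · simp [hz]
    · exact mul_nonneg (sub_nonneg.2 (hm z hz)) (sq_nonneg _)
  rw [inner_sub_right, inner_smul_right, sub_re, re_ofReal_mul] at nonneg
  exact (sub_nonneg.1 nonneg).trans_eq'
    (congrArg (m * ·) (inner_self_eq_norm_sq (𝕜 := ℂ) u))

end L2

theorem isSymmetric_momentum [BorelSpace X] [FiniteDimensional ℝ X] [μ.IsAddHaarMeasure]
    (v : X) : (momentum μ v).IsSymmetric := fun u w => by
  have conj_deriv : ∀ z, fderiv ℝ (fun z => conj (u z)) z v = -I * conj (momentum μ v u z) :=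
    fun z => by
      refine (DFunLike.congr_fun (conjCLE.toContinuousLinearMap.hasFDerivAt.comp z
        (u.differentiable z).hasFDerivAt).fderiv v).trans ?_
      simp [← mul_assoc]
  have deriv_eq : ∀ z, fderiv ℝ w z v = I * momentum μ v w z := fun z => by
    simp [← mul_assoc]
  have parts := integral_mul_fderiv_eq_neg_fderiv_mul_of_integrable (μ := μ) (v := v)
    (f := fun z => conj (u z)) (g := w)
    (by simpa only [conj_deriv, mul_assoc] using
      (integrable_conj_mul (momentum μ v u) w).const_mul _)
    (by simpa only [deriv_eq, mul_left_comm] using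
      (integrable_conj_mul u (momentum μ v w)).const_mul _)
    (integrable_conj_mul u w)
    (fun z _ => conjCLE.differentiable.comp u.differentiable z) (fun z _ => w.differentiable z)
  simp only [conj_deriv, deriv_eq, mul_assoc, mul_left_comm _ I, integral_const_mul, neg_mul,
    neg_neg, integral_neg] at parts
  rw [inner_eq_integral, inner_eq_integral]
  exact (mul_left_cancel₀ I_ne_zero parts).symm

end L2TestFunction

end TestFunctions

section GalileanFrame

theorem fderiv_comp_snd_apply {E F : Type*} [NormedAddCommGroup E] [NormedSpace ℝ E]
    [NormedAddCommGroup F] [NormedSpace ℝ F] {f : ℝ → F} (hf : Differentiable ℝ f) (z w : E × ℝ) :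
    fderiv ℝ (fun z : E × ℝ => f z.2) z w = w.2 • deriv f z.2 := by
  have chain := ((hf z.2).hasDerivAt.hasFDerivAt.comp z hasFDerivAt_snd).fderiv
  exact (DFunLike.congr_fun chain w).trans (by simp)

variable {E : Type*} [NormedAddCommGroup E] [InnerProductSpace ℝ E] {a : ℝ → E}

theorem contDiff_inner_comp_snd (ha : ContDiff ℝ ∞ a) (v : E) :
    ContDiff ℝ ∞ (fun z : E × ℝ => inner ℝ v (a z.2)) :=
  contDiff_const.inner ℝ (ha.comp contDiff_snd)

namespace L2TestFunction

variable [MeasurableSpace E] {ι : Type*} [Fintype ι]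

variable (μ : Measure (E × ℝ))

/-- The kinetic momentum `-i∂_v + ⟪v, a(t)⟫` in the direction `v` of space, for the spatially
constant vector potential `a`. -/
noncomputable def kineticMomentum (ha : ContDiff ℝ ∞ a) (v : E) :
    Module.End ℂ (L2TestFunction μ) :=
  momentum μ (v, 0) + mulOp μ (fun z => inner ℝ v (a z.2)) (contDiff_inner_comp_snd ha v)

/-- The Schrödinger operator `i∂ₜ + Δ`, in the coordinates of an orthonormal basis of space. -/
noncomputable def schrodinger (b : OrthonormalBasis ι ℝ E) : Module.End ℂ (L2TestFunction μ) :=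
  -momentum μ (0, 1) - ∑ j, momentum μ (b j, 0) ^ 2

/-- The energy operator `i∂ₜ + ∑ⱼ (Πⱼ² - pⱼ²)`, where `Πⱼ` is the kinetic momentum of the vector
potential `a` and `pⱼ = -i∂ⱼ`. Up to a multiplication operator, it is `i` times the derivative along
the worldlines of velocity `-2a(t)`. -/
noncomputable def galileanEnergy (b : OrthonormalBasis ι ℝ E) (ha : ContDiff ℝ ∞ a) :
    Module.End ℂ (L2TestFunction μ) :=
  ∑ j, (kineticMomentum μ ha (b j) ^ 2 - momentum μ (b j, 0) ^ 2) - momentum μ (0, 1)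

variable {μ} (b : OrthonormalBasis ι ℝ E) (ha : ContDiff ℝ ∞ a)

theorem galileanEnergy_sub_sum_sq_kineticMomentum :
    galileanEnergy μ b ha - ∑ j, kineticMomentum μ ha (b j) ^ 2 = schrodinger μ b := by
  rw [galileanEnergy, schrodinger, Finset.sum_sub_distrib]
  abel

theorem commute_momentum_mulOp_inner_snd (v w : E) :
    Commute (momentum μ (w, 0))
      (mulOp μ (fun z => inner ℝ v (a z.2)) (contDiff_inner_comp_snd ha v)) :=
  commute_momentum_mulOp _ fun z => by
    rw [fderiv_comp_snd_apply ((differentiable_const v).inner ℝ (ha.differentiable (by simp))),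
      zero_smul]

theorem commute_kineticMomentum_momentum (v w : E) :
    Commute (kineticMomentum μ ha v) (momentum μ (w, 0)) :=
  (commute_momentum _ _).add_left (commute_momentum_mulOp_inner_snd ha v w).symm

theorem commute_kineticMomentum (v w : E) :
    Commute (kineticMomentum μ ha v) (kineticMomentum μ ha w) :=
  (commute_kineticMomentum_momentum ha v w).add_right
    ((commute_momentum_mulOp_inner_snd ha w v).add_left (commute_mulOp _ _))

theorem lie_kineticMomentum_mulOp (v : E) {m n : E × ℝ → ℝ} (hm : ContDiff ℝ ∞ m)
    (hn : ContDiff ℝ ∞ n) (hmn : ∀ z, fderiv ℝ n z (v, 0) = m z) :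
    ⁅kineticMomentum μ ha v, mulOp μ n hn⁆ = -I • mulOp μ m hm := by
  rw [kineticMomentum, add_lie, lie_momentum_mulOp hn hm hmn,
    commute_iff_lie_eq.1 (commute_mulOp _ hn), add_zero]

theorem lie_galileanEnergy_mulOp {m n : E × ℝ → ℝ} (hm : ContDiff ℝ ∞ m) (hn : ContDiff ℝ ∞ n)
    (hmn : ∀ z, fderiv ℝ n z (-(2 : ℝ) • a z.2, 1) = m z) :
    ⁅galileanEnergy μ b ha, mulOp μ n hn⁆ = I • mulOp μ m hm := by
  have partial_contDiff : ∀ v, ContDiff ℝ ∞ (fun z => fderiv ℝ n z v) := fun v =>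
    (hn.fderiv_right (by simp)).clm_apply contDiff_const
  have worldline : ∀ z, m z = fderiv ℝ n z (0, 1)
      - 2 * ∑ j, inner ℝ (b j) (a z.2) * fderiv ℝ n z (b j, 0) := fun z => by
    have split : (-(2 : ℝ) • a z.2, (1 : ℝ))
        = (0, 1) - (2 : ℝ) • ∑ j, inner ℝ (b j) (a z.2) • (b j, (0 : ℝ)) := by
      ext <;> simp [Prod.fst_sum, Prod.snd_sum, b.sum_repr']
    rw [← hmn, split, map_sub, map_smul, map_sum, smul_eq_mul]
    simp only [map_smul, smul_eq_mul]
  have kinetic : ∀ j (u : L2TestFunction μ) z,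
      ⁅kineticMomentum μ ha (b j) ^ 2 - momentum μ (b j, 0) ^ 2, mulOp μ n hn⁆ u z
        = -I * (2 * (inner ℝ (b j) (a z.2) * fderiv ℝ n z (b j, 0)) : ℝ) * u z := fun j u z => by
    rw [kineticMomentum, lie_add_sq_sub_sq (commute_momentum_mulOp_inner_snd ha _ _)
      (commute_mulOp _ _), lie_momentum_mulOp hn (partial_contDiff _) fun _ => rfl]
    simp only [mul_smul_comm, LinearMap.smul_apply, smul_apply, Module.End.mul_apply, mulOp_apply,
      two_nsmul, LinearMap.add_apply, add_apply, smul_eq_mul, real_smul]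
    push_cast
    ring
  ext u z
  rw [galileanEnergy, sub_lie, sum_lie, lie_momentum_mulOp hn (partial_contDiff _) fun _ => rfl,
    LinearMap.sub_apply, LinearMap.sum_apply, sub_apply, sum_apply]
  simp only [kinetic, ← Finset.sum_mul, ← Finset.mul_sum, ← ofReal_sum, LinearMap.smul_apply,
    smul_apply, mulOp_apply, smul_eq_mul, real_smul, worldline]
  push_cast
  ring

theorem commute_galileanEnergy_mulOp {n : E × ℝ → ℝ} (hn : ContDiff ℝ ∞ n)
    (hn0 : ∀ z, fderiv ℝ n z (-(2 : ℝ) • a z.2, 1) = 0) :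
    Commute (galileanEnergy μ b ha) (mulOp μ n hn) := by
  rw [commute_iff_lie_eq, lie_galileanEnergy_mulOp b ha contDiff_const hn hn0]
  ext u z
  simp

theorem lie_galileanEnergy_kineticMomentum (v : E) :
    ⁅galileanEnergy μ b ha, kineticMomentum μ ha v⁆
      = I • mulOp μ (fun z => inner ℝ v (deriv a z.2))
          (contDiff_inner_comp_snd (contDiff_infty_iff_deriv.1 ha).2 v) := by
  have commute_momentum_v : Commute (galileanEnergy μ b ha) (momentum μ (v, 0)) :=
    .sub_left (.sum_left _ _ _ fun j _ =>
      ((commute_kineticMomentum_momentum ha _ _).pow_left 2).sub_left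
        ((commute_momentum _ _).pow_left 2)) (commute_momentum _ _)
  rw [kineticMomentum, lie_add, commute_iff_lie_eq.1 commute_momentum_v, zero_add]
  refine lie_galileanEnergy_mulOp b ha _ _ fun z => ?_
  have hd : Differentiable ℝ a := ha.differentiable (by simp)
  rw [fderiv_comp_snd_apply ((differentiable_const v).inner ℝ hd), one_smul,
    deriv_inner_apply ℝ (differentiableAt_const v) (hd z.2), deriv_const, inner_zero_left, add_zero]

variable [BorelSpace E] [FiniteDimensional ℝ E] [μ.IsAddHaarMeasure]

theorem isSymmetric_kineticMomentum (v : E) : (kineticMomentum μ ha v).IsSymmetric :=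
  (isSymmetric_momentum _).add (isSymmetric_mulOp _ _)

theorem isSymmetric_galileanEnergy : (galileanEnergy μ b ha).IsSymmetric :=
  (LinearMap.isSymmetric_sum _ fun _ _ => ((isSymmetric_kineticMomentum ha _).pow 2).sub
    ((isSymmetric_momentum _).pow 2)).sub (isSymmetric_momentum _)

end L2TestFunction

end GalileanFrame

section MovingWeight

variable {E : Type*} [NormedAddCommGroup E] [InnerProductSpace ℝ E]

/-- The rescaled position `x / R + p(t)` relative to the moving centre `-R p(t)`. -/
noncomputable def movingPoint (R : ℝ) (p : ℝ → E) (z : E × ℝ) : E := R⁻¹ • z.1 + p z.2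

/-- The Carleman weight `exp (σ |x / R + p(t)|²)`. -/
noncomputable def movingWeight (σ R : ℝ) (p : ℝ → E) (z : E × ℝ) : ℝ :=
  Real.exp (σ * ‖movingPoint R p z‖ ^ 2)

/-- The vector potential `(R / 2) p'(t)`, for which the worldlines of velocity `-R p'(t)` of
`L2TestFunction.galileanEnergy` follow the centre of the weight. -/
noncomputable def centerPotential (R : ℝ) (p : ℝ → E) (t : ℝ) : E := (R / 2) • deriv p t

/-- The potential which remains, next to the nonnegative operator `8σ / R² ∑ⱼ Πⱼ²`, in the
commutator of the symmetric and antisymmetric parts of the conjugated Schrödinger operator. -/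
noncomputable def commutatorPotential (σ R : ℝ) (p : ℝ → E) (z : E × ℝ) : ℝ :=
  32 * σ ^ 3 / R ^ 4 * ‖movingPoint R p z‖ ^ 2
    + 2 * σ * inner ℝ (movingPoint R p z) (deriv (deriv p) z.2)

theorem pow_div_pow_le_commutatorPotential {σ R K : ℝ} {p : ℝ → E} {z : E × ℝ} (hR : 0 < R)
    (hσ : (K + 1) * R ^ 2 ≤ σ) (hp'' : ‖deriv (deriv p) z.2‖ ≤ K)
    (hz : 1 ≤ ‖movingPoint R p z‖) : σ ^ 3 / R ^ 4 ≤ commutatorPotential σ R p z := by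
  have hK : 0 ≤ K := (norm_nonneg _).trans hp''
  have hσ0 : 0 ≤ σ := (by positivity : 0 ≤ (K + 1) * R ^ 2).trans hσ
  have hKσ : K * σ ≤ σ ^ 3 / R ^ 4 := by
    have ratio : K + 1 ≤ σ / R ^ 2 := (le_div_iff₀ (by positivity)).2 hσ
    calc K * σ ≤ (K + 1) ^ 2 * σ := by gcongr; nlinarith
      _ ≤ (σ / R ^ 2) ^ 2 * σ := by gcongr
      _ = σ ^ 3 / R ^ 4 := by ring
  have cross : -(K * ‖movingPoint R p z‖ ^ 2)
      ≤ inner ℝ (movingPoint R p z) (deriv (deriv p) z.2) := by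
    rw [neg_le, ← inner_neg_right]
    calc inner ℝ (movingPoint R p z) (-deriv (deriv p) z.2)
        ≤ ‖movingPoint R p z‖ * ‖-deriv (deriv p) z.2‖ := real_inner_le_norm _ _
      _ ≤ ‖movingPoint R p z‖ ^ 2 * K := by
        rw [norm_neg]
        gcongr
        exact le_self_pow₀ hz two_ne_zero
      _ = K * ‖movingPoint R p z‖ ^ 2 := mul_comm _ _
  calc σ ^ 3 / R ^ 4 ≤ σ ^ 3 / R ^ 4 * ‖movingPoint R p z‖ ^ 2 :=
        le_mul_of_one_le_right (by positivity) (one_le_pow₀ hz)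
    _ ≤ (32 * (σ ^ 3 / R ^ 4) - 2 * (K * σ)) * ‖movingPoint R p z‖ ^ 2 := by
        gcongr
        linarith [(by positivity : 0 ≤ K * σ)]
    _ = 32 * σ ^ 3 / R ^ 4 * ‖movingPoint R p z‖ ^ 2
        + 2 * σ * -(K * ‖movingPoint R p z‖ ^ 2) := by ring
    _ ≤ commutatorPotential σ R p z := by
        rw [commutatorPotential]
        gcongr

section Calculus

variable (σ R : ℝ) {p : ℝ → E} (hp : ContDiff ℝ ∞ p)

include hp

theorem contDiff_movingPoint : ContDiff ℝ ∞ (movingPoint R p) :=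
  (contDiff_fst.const_smul R⁻¹).add (hp.comp contDiff_snd)

theorem contDiff_movingWeight : ContDiff ℝ ∞ (movingWeight σ R p) :=
  (contDiff_const.mul ((contDiff_movingPoint R hp).norm_sq ℝ)).exp

theorem contDiff_centerPotential : ContDiff ℝ ∞ (centerPotential R p) :=
  (contDiff_infty_iff_deriv.1 hp).2.const_smul _

theorem contDiff_mul_inner_movingPoint (c : ℝ) (v : E) :
    ContDiff ℝ ∞ (fun z => c * inner ℝ v (movingPoint R p z)) :=
  contDiff_const.mul (contDiff_const.inner ℝ (contDiff_movingPoint R hp))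

theorem fderiv_movingPoint_apply (z w : E × ℝ) :
    fderiv ℝ (movingPoint R p) z w = R⁻¹ • w.1 + w.2 • deriv p z.2 := by
  have hd : Differentiable ℝ p := hp.differentiable (by simp)
  have fst : DifferentiableAt ℝ (fun z : E × ℝ => R⁻¹ • z.1) z :=
    differentiableAt_fst.const_smul R⁻¹
  have snd : DifferentiableAt ℝ (fun z : E × ℝ => p z.2) z := (hd _).comp z differentiableAt_snd
  rw [show movingPoint R p = (fun z => R⁻¹ • z.1) + fun z => p z.2 from rfl, fderiv_add fst snd,
    add_apply, fderiv_comp_snd_apply hd, fderiv_fun_const_smul differentiableAt_fst]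
  simp [fderiv_fst]

theorem fderiv_movingPoint_worldline {R : ℝ} (hR : R ≠ 0) (z : E × ℝ) :
    fderiv ℝ (movingPoint R p) z (-(2 : ℝ) • centerPotential R p z.2, 1) = 0 := by
  rw [fderiv_movingPoint_apply R hp, centerPotential]
  match_scalars
  field_simp
  ring

theorem fderiv_mul_inner_movingPoint_apply (c : ℝ) (v : E) (z w : E × ℝ) :
    fderiv ℝ (fun z => c * inner ℝ v (movingPoint R p z)) z w
      = c * inner ℝ v (fderiv ℝ (movingPoint R p) z w) := by
  have hd := (contDiff_movingPoint R hp).differentiable (by simp) z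
  rw [fderiv_const_mul ((differentiableAt_const v).inner ℝ hd), smul_apply,
    fderiv_inner_apply ℝ (differentiableAt_const v) hd]
  simp

theorem fderiv_movingWeight_apply (z w : E × ℝ) :
    fderiv ℝ (movingWeight σ R p) z w
      = 2 * σ * inner ℝ (movingPoint R p z) (fderiv ℝ (movingPoint R p) z w)
        * movingWeight σ R p z := by
  have hd := (contDiff_movingPoint R hp).differentiable (by simp) z
  have chain := (hd.hasFDerivAt.norm_sq.const_mul σ).exp.fderiv
  refine (DFunLike.congr_fun chain w).trans ?_
  simp only [movingWeight, smul_apply, ContinuousLinearMap.comp_apply, coe_innerSL_apply,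
    nsmul_eq_mul, Nat.cast_ofNat, smul_eq_mul]
  ring

theorem deriv_centerPotential (t : ℝ) :
    deriv (centerPotential R p) t = (R / 2) • deriv (deriv p) t :=
  deriv_const_smul _ ((contDiff_infty_iff_deriv.1 hp).2.differentiable (by simp) t)

theorem contDiff_commutatorPotential : ContDiff ℝ ∞ (commutatorPotential σ R p) := by
  have hp'' : ContDiff ℝ ∞ (deriv (deriv p)) :=
    (contDiff_infty_iff_deriv.1 (contDiff_infty_iff_deriv.1 hp).2).2
  have hy := contDiff_movingPoint R hp
  exact (contDiff_const.mul (hy.norm_sq ℝ)).add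
    (contDiff_const.mul (hy.inner ℝ (hp''.comp contDiff_snd)))

end Calculus

namespace L2TestFunction

variable [MeasurableSpace E] (μ : Measure (E × ℝ)) (σ R : ℝ) {p : ℝ → E}
variable {ι : Type*} [Fintype ι] (b : OrthonormalBasis ι ℝ E)

/-- Multiplication by the Carleman weight. -/
noncomputable def weightOp (hp : ContDiff ℝ ∞ p) : Module.End ℂ (L2TestFunction μ) :=
  mulOp μ (movingWeight σ R p) (contDiff_movingWeight σ R hp)

/-- Multiplication by the derivative in the direction `v` of the phase `σ |x / R + p(t)|²`. -/
noncomputable def phaseGradientOp (hp : ContDiff ℝ ∞ p) (v : E) : Module.End ℂ (L2TestFunction μ) :=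
  mulOp μ (fun z => 2 * σ / R * inner ℝ v (movingPoint R p z))
    (contDiff_mul_inner_movingPoint R hp _ v)

variable {μ σ R} (hp : ContDiff ℝ ∞ p)

theorem commute_galileanEnergy_phaseGradientOp (hR : R ≠ 0) (v : E) :
    Commute (galileanEnergy μ b (contDiff_centerPotential R hp)) (phaseGradientOp μ σ R hp v) :=
  commute_galileanEnergy_mulOp b _ _ fun z => by
    rw [fderiv_mul_inner_movingPoint_apply R hp, fderiv_movingPoint_worldline hp hR,
      inner_zero_right, mul_zero]

theorem commute_galileanEnergy_weightOp (hR : R ≠ 0) :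
    Commute (galileanEnergy μ b (contDiff_centerPotential R hp)) (weightOp μ σ R hp) :=
  commute_galileanEnergy_mulOp b _ _ fun z => by
    rw [fderiv_movingWeight_apply σ R hp, fderiv_movingPoint_worldline hp hR,
      inner_zero_right, mul_zero, zero_mul]

theorem lie_kineticMomentum_phaseGradientOp {a : ℝ → E} (ha : ContDiff ℝ ∞ a) (v w : E) :
    ⁅kineticMomentum μ ha v, phaseGradientOp μ σ R hp w⁆
      = (-I * (2 * σ / R ^ 2 * inner ℝ w v : ℝ)) • 1 := by
  rw [phaseGradientOp, lie_kineticMomentum_mulOp ha v contDiff_const _ fun z => by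
    rw [fderiv_mul_inner_movingPoint_apply R hp, fderiv_movingPoint_apply R hp, zero_smul,
      add_zero, inner_smul_right]]
  ext u z
  simp only [LinearMap.smul_apply, smul_apply, mulOp_apply, Module.End.one_apply, smul_eq_mul,
    real_smul]
  push_cast
  ring

theorem lie_kineticMomentum_weightOp {a : ℝ → E} (ha : ContDiff ℝ ∞ a) (v : E) :
    ⁅kineticMomentum μ ha v, weightOp μ σ R hp⁆
      = -I • (phaseGradientOp μ σ R hp v * weightOp μ σ R hp) := by
  rw [weightOp, lie_kineticMomentum_mulOp ha v
    ((contDiff_mul_inner_movingPoint R hp (2 * σ / R) v).mul (contDiff_movingWeight σ R hp)) _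
    fun z => by
      rw [fderiv_movingWeight_apply σ R hp, fderiv_movingPoint_apply R hp, zero_smul, add_zero,
        inner_smul_right, real_inner_comm]
      ring]
  ext u z
  simp only [LinearMap.smul_apply, smul_apply, Module.End.mul_apply, phaseGradientOp, mulOp_apply,
    mul_smul]

theorem semiconjBy_weightOp_kineticMomentum {a : ℝ → E} (ha : ContDiff ℝ ∞ a) (v : E) :
    SemiconjBy (weightOp μ σ R hp) (kineticMomentum μ ha v)
      (kineticMomentum μ ha v + I • phaseGradientOp μ σ R hp v) := by
  have lie := lie_kineticMomentum_weightOp (μ := μ) (σ := σ) (R := R) hp ha v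
  rw [Ring.lie_def, sub_eq_iff_eq_add'] at lie
  rw [SemiconjBy, add_mul, lie, smul_mul_assoc, neg_smul, neg_add_cancel_right]

theorem weightOp_mul_schrodinger (hR : R ≠ 0) :
    weightOp μ σ R hp * schrodinger μ b
      = (galileanEnergy μ b (contDiff_centerPotential R hp)
        - ∑ j, (kineticMomentum μ (contDiff_centerPotential R hp) (b j)
          + I • phaseGradientOp μ σ R hp (b j)) ^ 2) * weightOp μ σ R hp := by
  rw [← galileanEnergy_sub_sum_sq_kineticMomentum b (contDiff_centerPotential R hp), mul_sub,
    sub_mul, Finset.mul_sum, Finset.sum_mul, (commute_galileanEnergy_weightOp b hp hR).eq]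
  exact congrArg _ <| Finset.sum_congr rfl fun j _ =>
    ((semiconjBy_weightOp_kineticMomentum hp _ (b j)).pow_right 2).eq

theorem sum_sq_phaseGradientOp_add_mul_eq (hR : R ≠ 0) :
    ∑ j, ((4 * (2 * σ / R ^ 2 : ℝ) : ℂ) • phaseGradientOp μ σ R hp (b j) ^ 2
        + (2 : ℂ) • (phaseGradientOp μ σ R hp (b j)
          * mulOp μ (fun z => inner ℝ (b j) (deriv (centerPotential R p) z.2))
            (contDiff_inner_comp_snd
              (contDiff_infty_iff_deriv.1 (contDiff_centerPotential R hp)).2 (b j))))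
      = mulOp μ (commutatorPotential σ R p) (contDiff_commutatorPotential σ R hp) := by
  have potential_eq : ∀ z, commutatorPotential σ R p z
      = ∑ j, (4 * (2 * σ / R ^ 2) * (2 * σ / R * inner ℝ (b j) (movingPoint R p z)) ^ 2
        + 2 * (2 * σ / R * inner ℝ (b j) (movingPoint R p z)
          * inner ℝ (b j) (deriv (centerPotential R p) z.2))) := fun z => by
    have parseval_inner : ∑ j, inner ℝ (b j) (movingPoint R p z)
        * inner ℝ (b j) (deriv (deriv p) z.2)
          = inner ℝ (movingPoint R p z) (deriv (deriv p) z.2) := by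
      simpa only [real_inner_comm] using
        b.sum_inner_mul_inner (movingPoint R p z) (deriv (deriv p) z.2)
    rw [commutatorPotential, ← b.sum_sq_inner_right, ← parseval_inner, Finset.mul_sum,
      Finset.mul_sum, ← Finset.sum_add_distrib]
    refine Finset.sum_congr rfl fun j _ => ?_
    rw [deriv_centerPotential R hp, inner_smul_right]
    field_simp
    ring
  ext u z
  rw [LinearMap.sum_apply, sum_apply, mulOp_apply, potential_eq, Finset.sum_smul]
  refine Finset.sum_congr rfl fun j _ => ?_
  simp only [sq, LinearMap.add_apply, LinearMap.smul_apply, add_apply, smul_apply,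
    Module.End.mul_apply, phaseGradientOp, mulOp_apply, smul_eq_mul, real_smul]
  push_cast
  ring

variable [BorelSpace E] [FiniteDimensional ℝ E] [μ.IsAddHaarMeasure]

theorem pow_div_pow_mul_norm_weightOp_sq_le {K : ℝ} (hR : 0 < R) (hσ : (K + 1) * R ^ 2 ≤ σ)
    (hp'' : ∀ t, ‖deriv (deriv p) t‖ ≤ K) {u : L2TestFunction μ}
    (hu : ∀ z, u z ≠ 0 → 1 ≤ ‖movingPoint R p z‖) :
    σ ^ 3 / R ^ 4 * ‖weightOp μ σ R hp u‖ ^ 2 ≤ ‖weightOp μ σ R hp (schrodinger μ b u)‖ ^ 2 := by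
  have hK : 0 ≤ K := (norm_nonneg _).trans (hp'' 0)
  have hσ0 : 0 ≤ σ := (by positivity : 0 ≤ (K + 1) * R ^ 2).trans hσ
  have potential_ge : ∀ z, weightOp μ σ R hp u z ≠ 0 →
      σ ^ 3 / R ^ 4 ≤ commutatorPotential σ R p z := fun z hz =>
    pow_div_pow_le_commutatorPotential hR hσ (hp'' _) (hu z (right_ne_zero_of_smul hz))
  have conjugate := LinearMap.congr_fun (weightOp_mul_schrodinger (σ := σ) (μ := μ) b hp hR.ne') u
  rw [Module.End.mul_apply, Module.End.mul_apply] at conjugate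
  rw [conjugate]
  classical
  refine (mul_norm_sq_le_re_inner_mulOp
    (contDiff_commutatorPotential σ R hp) potential_ge).trans ?_
  rw [← sum_sq_phaseGradientOp_add_mul_eq b hp hR.ne']
  refine inner_sum_sq_add_mul_le (by positivity) (isSymmetric_galileanEnergy b _)
    (fun j => isSymmetric_kineticMomentum _ _) (fun j => isSymmetric_mulOp _ _)
    (fun j => commute_galileanEnergy_phaseGradientOp b hp hR.ne' _)
    (fun j => lie_galileanEnergy_kineticMomentum b _ _)
    (fun j => commute_mulOp _ _) (fun i j => commute_kineticMomentum _ _ _)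
    (fun i j => commute_mulOp _ _) (fun i j => ?_) _
  refine (lie_kineticMomentum_phaseGradientOp hp _ _ _).trans ?_
  rw [b.inner_eq_ite]
  split_ifs with hji hij hij
  · rw [mul_one]
  · exact absurd hji.symm hij
  · exact absurd hij.symm hji
  · simp

end L2TestFunction

end MovingWeight

section Slices

variable {E F : Type*} [NormedAddCommGroup E] [NormedSpace ℝ E] [NormedAddCommGroup F]
  [NormedSpace ℝ F]

theorem fderiv_slice_apply {f : E × ℝ → F} (hf : Differentiable ℝ f) (x v : E) (t : ℝ) :
    fderiv ℝ (fun y => f (y, t)) x v = fderiv ℝ f (x, t) (v, 0) := by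
  have chain := HasFDerivAt.comp (f := fun y : E => (y, t)) x (hf (x, t)).hasFDerivAt
    (hasFDerivAt_prodMk_left x t)
  exact (DFunLike.congr_fun chain.fderiv v).trans (by simp)

theorem deriv_slice {f : E × ℝ → F} (hf : Differentiable ℝ f) (x : E) (t : ℝ) :
    deriv (fun s => f (x, s)) t = fderiv ℝ f (x, t) (0, 1) :=
  ((hf (x, t)).hasFDerivAt.comp_hasDerivAt t
    ((hasDerivAt_const t x).prodMk (hasDerivAt_id t))).deriv

theorem iteratedFDeriv_two_slice_apply {f : E × ℝ → F} (hf : ContDiff ℝ 2 f) (x v w : E) (t : ℝ) :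
    iteratedFDeriv ℝ 2 (fun y => f (y, t)) x ![v, w]
      = fderiv ℝ (fderiv ℝ f) (x, t) (v, 0) (w, 0) := by
  have hd : Differentiable ℝ f := hf.differentiable (by simp)
  have hdw : Differentiable ℝ (fun z => fderiv ℝ f z (w, 0)) :=
    ((hf.fderiv_right (m := 1) (by norm_num)).clm_apply contDiff_const).differentiable (by simp)
  have slice : ContDiff ℝ 2 (fun y => f (y, t)) := hf.comp (contDiff_id.prodMk contDiff_const)
  rw [iteratedFDeriv_two_apply, ← fderiv_fderiv_apply slice]
  simp only [fderiv_slice_apply hd, fderiv_slice_apply hdw, fderiv_fderiv_apply hf,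
    Matrix.cons_val_zero, Matrix.cons_val_one]

end Slices

theorem L2TestFunction.schrodinger_apply {E ι : Type*} [NormedAddCommGroup E]
    [InnerProductSpace ℝ E] [FiniteDimensional ℝ E] [MeasurableSpace E] {μ : Measure (E × ℝ)}
    [Fintype ι] (b : OrthonormalBasis ι ℝ E) (u : L2TestFunction μ) (z : E × ℝ) :
    schrodinger μ b u z
      = I * deriv (fun s => u (z.1, s)) z.2 + Δ (fun x => u (x, z.2)) z.1 := by
  have hu : ContDiff ℝ 2 u := u.contDiff.of_le (by norm_cast)
  rw [InnerProductSpace.laplacian_eq_iteratedFDeriv_orthonormalBasis _ b,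
    deriv_slice u.differentiable]
  simp only [schrodinger, sq, LinearMap.sub_apply, LinearMap.neg_apply, LinearMap.sum_apply,
    sub_apply, neg_apply, sum_apply, momentum_mul_momentum_apply, momentum_apply,
    iteratedFDeriv_two_slice_apply hu, Finset.sum_neg_distrib]
  ring

theorem carleman_moving_weight_general {E : Type*} [NormedAddCommGroup E] [InnerProductSpace ℝ E]
    [FiniteDimensional ℝ E] [MeasurableSpace E] [BorelSpace E] (μ : Measure (E × ℝ))
    [μ.IsAddHaarMeasure] {σ R K : ℝ} (hR : 0 < R) (hσ : (K + 1) * R ^ 2 ≤ σ) {p : ℝ → E}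
    (hp : ContDiff ℝ ∞ p) (hp'' : ∀ t, ‖deriv (deriv p) t‖ ≤ K) {g : E × ℝ → ℂ}
    (hg : ContDiff ℝ ∞ g) (hgc : HasCompactSupport g)
    (hsupp : Function.support g ⊆ {z | 1 ≤ ‖movingPoint R p z‖}) :
    ENNReal.ofReal (σ ^ ((3 : ℝ) / 2) / R ^ 2)
        * eLpNorm (fun z => movingWeight σ R p z • g z) 2 μ
      ≤ eLpNorm (fun z => movingWeight σ R p z •
          (I * deriv (fun s => g (z.1, s)) z.2 + Δ (fun x => g (x, z.2)) z.1)) 2 μ := by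
  have hK : 0 ≤ K := (norm_nonneg _).trans (hp'' 0)
  have hσ0 : 0 ≤ σ := (by positivity : 0 ≤ (K + 1) * R ^ 2).trans hσ
  have constant_sq : (σ ^ ((3 : ℝ) / 2) / R ^ 2) ^ 2 = σ ^ 3 / R ^ 4 := by
    rw [div_pow, ← pow_mul, ← Real.rpow_mul_natCast hσ0, ← Real.rpow_natCast σ 3]
    norm_num
  let b := stdOrthonormalBasis ℝ E
  let u := L2TestFunction.of μ g hg hgc
  have bound := L2TestFunction.pow_div_pow_mul_norm_weightOp_sq_le b hp hR hσ hp'' (u := u)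
    fun z hz => hsupp hz
  rw [← constant_sq, ← mul_pow] at bound
  calc ENNReal.ofReal (σ ^ ((3 : ℝ) / 2) / R ^ 2)
        * eLpNorm (fun z => movingWeight σ R p z • g z) 2 μ
      = ENNReal.ofReal (σ ^ ((3 : ℝ) / 2) / R ^ 2 * ‖L2TestFunction.weightOp μ σ R hp u‖) := by
        rw [ENNReal.ofReal_mul (by positivity), L2TestFunction.ofReal_norm_eq_eLpNorm]
        rfl
    _ ≤ ENNReal.ofReal ‖L2TestFunction.weightOp μ σ R hp (L2TestFunction.schrodinger μ b u)‖ :=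
        ENNReal.ofReal_le_ofReal (le_of_sq_le_sq bound (norm_nonneg _))
    _ = eLpNorm (fun z => movingWeight σ R p z •
          (I * deriv (fun s => g (z.1, s)) z.2 + Δ (fun x => g (x, z.2)) z.1)) 2 μ := by
        rw [L2TestFunction.ofReal_norm_eq_eLpNorm]
        congr 1
        funext z
        exact congrArg (movingWeight σ R p z • ·) (L2TestFunction.schrodinger_apply b u z)

theorem spatialLaplacian_eq_laplacian {n : ℕ} (f : EuclideanSpace ℝ (Fin n) → ℂ) :
    spatialLaplacian f = Δ f := by
  rw [InnerProductSpace.laplacian_eq_iteratedFDeriv_orthonormalBasis f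
    (EuclideanSpace.basisFun (Fin n) ℝ)]
  funext x
  simp [spatialLaplacian]

theorem deriv_deriv_smul_const {F : Type*} [NormedAddCommGroup F] [NormedSpace ℝ F] {φ : ℝ → ℝ}
    (hφ : ContDiff ℝ 2 φ) (e : F) (t : ℝ) :
    deriv (deriv fun t => φ t • e) t = deriv (deriv φ) t • e := by
  have first : (deriv fun t => φ t • e) = fun t => deriv φ t • e :=
    funext fun t => deriv_smul_const (hφ.differentiable (by simp) t) e
  rw [first, deriv_smul_const ((hφ.deriv' (n := 1)).differentiable (by simp) t)]

/-- Lemma (Carleman estimate with quadratic exponential weight centered along the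
moving point `-Rφ(t)e₁`): for `σ ≥ cR²` and `g` smooth, compactly supported, with
support in `{|x/R + φ(t)e₁| ≥ 1}`,
`(σ^{3/2}/R²)‖e^{σ|x/R+φ(t)e₁|²}g‖₂ ≤ c‖e^{σ|x/R+φ(t)e₁|²}(i∂ₜ+Δ)g‖₂`. -/
theorem carleman_moving_weight (n : ℕ) (hn : 1 ≤ n) (K : ℝ) (hK : 0 < K) :
    ∃ c : ℝ, 0 < c ∧
      ∀ (R : ℝ) (_ : 0 < R) (φ : ℝ → ℝ) (σ : ℝ)
        (g : EuclideanSpace ℝ (Fin n) × ℝ → ℂ),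
        ContDiff ℝ (⊤ : ℕ∞) φ →
        -- `sup|φ'| + sup|φ''| ≤ K`
        (∃ K₁ K₂ : ℝ, (∀ t, |deriv φ t| ≤ K₁) ∧ (∀ t, |deriv (deriv φ) t| ≤ K₂) ∧
          K₁ + K₂ ≤ K) →
        σ ≥ c * R ^ 2 →
        ContDiff ℝ (⊤ : ℕ∞) g → HasCompactSupport g →
        (Function.support g ⊆
          {z : EuclideanSpace ℝ (Fin n) × ℝ |
            1 ≤ ‖R⁻¹ • z.1 + φ z.2 • (EuclideanSpace.single (⟨0, hn⟩ : Fin n) (1:ℝ))‖}) →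
        ENNReal.ofReal (σ ^ ((3:ℝ)/2) / R ^ 2) *
            eLpNorm (fun z : EuclideanSpace ℝ (Fin n) × ℝ =>
              Real.exp (σ * ‖R⁻¹ • z.1 + φ z.2 • (EuclideanSpace.single (⟨0, hn⟩ : Fin n) (1:ℝ))‖ ^ 2)
                • g z) 2 volume
          ≤ ENNReal.ofReal c *
            eLpNorm (fun z : EuclideanSpace ℝ (Fin n) × ℝ =>
              Real.exp (σ * ‖R⁻¹ • z.1 + φ z.2 • (EuclideanSpace.single (⟨0, hn⟩ : Fin n) (1:ℝ))‖ ^ 2)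
                • (Complex.I * deriv (fun s => g (z.1, s)) z.2
                    + spatialLaplacian (fun y => g (y, z.2)) z.1)) 2 volume := by
  have : (volume : Measure (EuclideanSpace ℝ (Fin n) × ℝ)).IsAddHaarMeasure := by
    rw [Measure.volume_eq_prod]
    infer_instance
  refine ⟨K + 1, by positivity, fun R hR φ σ g hφ ⟨K₁, K₂, hK₁, hK₂, hsum⟩ hσ hg hgc hsupp => ?_⟩
  simp only [spatialLaplacian_eq_laplacian]
  have hp'' : ∀ t, ‖deriv (deriv fun t => φ t • EuclideanSpace.single (⟨0, hn⟩ : Fin n) (1 : ℝ)) t‖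
      ≤ K := fun t => by
    rw [deriv_deriv_smul_const (hφ.of_le (by norm_cast)), norm_smul,
      PiLp.norm_single, norm_one, mul_one, Real.norm_eq_abs]
    linarith [hK₂ t, abs_nonneg (deriv φ 0), hK₁ 0]
  have bound := carleman_moving_weight_general volume hR hσ (hφ.smul contDiff_const) hp'' hg hgc
    hsupp
  exact bound.trans (le_mul_of_one_le_left' (ENNReal.one_le_ofReal.2 (by linarith)))
end

section
/- Let n ≥ 1, let p ∈ (1,2), and let q = p/(p−1) be the conjugate exponent. There exists a constant c = c(n,p) ≥ 1 such that for every x ∈ ℝⁿ, (1/c) e^{|x|^p/p} ≤ ∫_{ℝⁿ} e^{λ·x − |λ|^q/q} |λ|^{n(q−2)/2} dλ ≤ c e^{|x|^p/p}. -/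
open MeasureTheory Complex Filter Set
open scoped ENNReal RealInnerProductSpace

/-!
This is Laplace's method, made uniform in `x` by exact identities. Let `Φ(l) = ‖l‖ ^ q / q` and
write `x = ∇Φ(m)`, which is solved by `m = ‖x‖ ^ (p - 2) • x`. The Fenchel-Young gap
`‖x‖ ^ p / p + ‖l‖ ^ q / q - ⟪l, x⟫` is then the Bregman divergence `D` of `Φ` at `l` relative to
`m`, so the integral divided by `exp (‖x‖ ^ p / p)` is `∫ exp (-D) ‖l‖ ^ α` with
`α = n (q - 2) / 2`, and it remains to bound this above and below uniformly in `m`.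

When `‖l‖` and `‖m‖` are comparable, `D` is comparable to `‖m‖ ^ (q - 2) * ‖l - m‖ ^ 2` and
`‖l‖ ^ α` to `‖m‖ ^ α`, which is exactly the factor normalizing the Gaussian
`exp (-a ‖m‖ ^ (q - 2) ‖l - m‖ ^ 2)`. When they are not comparable, `D ≥ ‖l‖ ^ q / (2 q)`, and
`‖l‖ ^ α * exp (-‖l‖ ^ q / (2 q))` is integrable and independent of `m`.
-/

open Module (finrank finrank_pos)

section Powers

lemma rpow_le_rpow_abs_mul_rpow {κ s t : ℝ} (e : ℝ) (hs : 0 < s) (ht : 0 < t)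
    (hst : s ≤ κ * t) (hts : t ≤ κ * s) : t ^ e ≤ κ ^ |e| * s ^ e := by
  have hκ : 0 ≤ κ := (pos_of_mul_pos_left (hs.trans_le hst) ht.le).le
  rcases le_total 0 e with he | he
  · rw [abs_of_nonneg he, ← Real.mul_rpow hκ hs.le]
    exact Real.rpow_le_rpow ht.le hts he
  · have h := Real.rpow_le_rpow hs.le hst (neg_nonneg.2 he)
    rw [Real.mul_rpow hκ ht.le, Real.rpow_neg hs.le, Real.rpow_neg ht.le] at h
    rw [abs_of_nonpos he]
    calc t ^ e = (s ^ e)⁻¹ * (t ^ e * s ^ e) := by field_simp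
      _ ≤ κ ^ (-e) * (t ^ e)⁻¹ * (t ^ e * s ^ e) := by gcongr
      _ = κ ^ (-e) * s ^ e := by field_simp

lemma exists_rpow_eq_taylor_two (q : ℝ) {b s : ℝ} (hb : 0 < b) (hs : 0 < s) :
    ∃ ξ ∈ uIcc b s,
      s ^ q = b ^ q + q * b ^ (q - 1) * (s - b) + q * (q - 1) / 2 * ξ ^ (q - 2) * (s - b) ^ 2 := by
  rcases eq_or_ne b s with rfl | hbs
  · exact ⟨b, left_mem_uIcc, by simp⟩
  have hpos : ∀ t ∈ uIcc b s, t ≠ 0 := fun t ht => ((lt_min hb hs).trans_le ht.1).ne'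
  obtain ⟨ξ, hξ, h⟩ := taylor_mean_remainder_lagrange_iteratedDeriv (n := 1) hbs
    fun t ht => (Real.contDiffAt_rpow_const_of_ne (p := q) (hpos t ht)).contDiffWithinAt
  have hderiv : derivWithin (fun t : ℝ => t ^ q) (uIcc b s) b = q * b ^ (q - 1) :=
    (Real.hasDerivAt_rpow_const (.inl hb.ne')).hasDerivWithinAt.derivWithin
      (uniqueDiffOn_uIcc hbs b left_mem_uIcc)
  have hderiv2 : iteratedDeriv 2 (fun t : ℝ => t ^ q) ξ = q * (q - 1) * ξ ^ (q - 2) := by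
    rw [iteratedDeriv_eq_iterate, Real.iter_deriv_rpow_const]
    simp [descPochhammer_succ_right]
  refine ⟨ξ, Ioo_subset_Icc_self hξ, ?_⟩
  norm_num [taylorWithinEval_succ, hderiv, hderiv2] at h
  linear_combination h

/-- The constants come from comparing the point `ξ` of the Lagrange remainder with `b`. -/
lemma rpow_taylor_remainder_mem_Icc {q κ b s : ℝ} (hq : 1 < q) (hκ : 1 ≤ κ) (hb : 0 < b)
    (hs : 0 < s) (hbs : b ≤ κ * s) (hsb : s ≤ κ * b) :
    s ^ q / q - b ^ q / q - b ^ (q - 1) * (s - b) ∈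
      Icc ((q - 1) / 2 * (κ ^ |q - 2|)⁻¹ * (b ^ (q - 2) * (s - b) ^ 2))
        ((q - 1) / 2 * κ ^ |q - 2| * (b ^ (q - 2) * (s - b) ^ 2)) := by
  obtain ⟨ξ, hξ, h⟩ := exists_rpow_eq_taylor_two q hb hs
  have hξ0 : 0 < ξ := (lt_min hb hs).trans_le hξ.1
  have hrem : s ^ q / q - b ^ q / q - b ^ (q - 1) * (s - b) =
      (q - 1) / 2 * ξ ^ (q - 2) * (s - b) ^ 2 := by
    rw [h]; field_simp; ring
  have hbξ : b ≤ κ * ξ := by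
    rcases min_le_iff.1 hξ.1 with hle | hle <;> nlinarith
  have hξb : ξ ≤ κ * b := by
    rcases le_max_iff.1 hξ.2 with hle | hle <;> nlinarith
  have hlower := rpow_le_rpow_abs_mul_rpow (q - 2) hξ0 hb hξb hbξ
  have hupper := rpow_le_rpow_abs_mul_rpow (q - 2) hb hξ0 hbξ hξb
  rw [hrem]
  constructor
  · calc _ = (q - 1) / 2 * ((κ ^ |q - 2|)⁻¹ * b ^ (q - 2)) * (s - b) ^ 2 := by ring
      _ ≤ _ := by gcongr; rwa [inv_mul_le_iff₀ (by positivity)]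
  · calc _ ≤ (q - 1) / 2 * (κ ^ |q - 2| * b ^ (q - 2)) * (s - b) ^ 2 := by gcongr
      _ = _ := by ring

lemma rpow_natCast_mul_div_two {x : ℝ} (hx : 0 ≤ x) (n : ℕ) (e : ℝ) :
    x ^ (n * e / 2) = (x ^ (e / 2)) ^ n := by
  rw [← Real.rpow_mul_natCast hx]
  congr 1; ring

lemma norm_rpow_div_two_smul_sq {E : Type*} [SeminormedAddCommGroup E] [NormedSpace ℝ E] {x : ℝ}
    (hx : 0 ≤ x) (e : ℝ) (v : E) : ‖x ^ (e / 2) • v‖ ^ 2 = x ^ e * ‖v‖ ^ 2 := by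
  rw [norm_smul, mul_pow, Real.norm_of_nonneg (by positivity), ← Real.rpow_mul_natCast hx]
  congr 2; push_cast; ring

end Powers

section Bregman

variable {E : Type*} [NormedAddCommGroup E] [InnerProductSpace ℝ E] {p q : ℝ}

/-- The duality map of exponent `q`, i.e. the gradient of `m ↦ ‖m‖ ^ q / q`. -/
noncomputable def dualityMap (q : ℝ) (m : E) : E :=
  ‖m‖ ^ (q - 2) • m

lemma norm_dualityMap (hq : q ≠ 1) (m : E) : ‖dualityMap q m‖ = ‖m‖ ^ (q - 1) := by
  rw [dualityMap, norm_smul, Real.norm_of_nonneg (by positivity),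
    ← Real.rpow_add_one' (norm_nonneg m) (by contrapose! hq; linarith)]
  congr 1; ring

lemma inner_self_dualityMap (hq : q ≠ 0) (m : E) : ⟪m, dualityMap q m⟫ = ‖m‖ ^ q := by
  rw [dualityMap, real_inner_smul_right, real_inner_self_eq_norm_sq,
    ← Real.rpow_add_natCast' (norm_nonneg m) (by simpa using hq)]
  congr 1; push_cast; ring

lemma abs_inner_dualityMap_le (hq : q ≠ 1) (l m : E) :
    |⟪l, dualityMap q m⟫| ≤ ‖m‖ ^ (q - 1) * ‖l‖ := by
  rw [← norm_dualityMap hq, mul_comm]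
  exact abs_real_inner_le_norm _ _

lemma dualityMap_dualityMap (hpq : p.HolderConjugate q) (x : E) :
    dualityMap q (dualityMap p x) = x := by
  rcases eq_or_ne x 0 with rfl | hx
  · simp [dualityMap]
  have hx0 : 0 < ‖x‖ := norm_pos_iff.2 hx
  have hexp : (p - 1) * (q - 2) + (p - 2) = 0 := by linear_combination hpq.mul_eq_add
  rw [dualityMap, norm_dualityMap hpq.lt.ne', dualityMap, smul_smul, ← Real.rpow_mul hx0.le,
    ← Real.rpow_add hx0, hexp, Real.rpow_zero, one_smul]

/-- The Bregman divergence at `l` relative to `m` of the convex function `‖·‖ ^ q / q`: the gap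
between this function and its affine approximation at `m`. -/
noncomputable def powBregman (q : ℝ) (m l : E) : ℝ :=
  ‖l‖ ^ q / q - ‖m‖ ^ q / q - ⟪l - m, dualityMap q m⟫

lemma powBregman_eq (hq : q ≠ 0) (m l : E) :
    powBregman q m l = ‖l‖ ^ q / q + (1 - 1 / q) * ‖m‖ ^ q - ⟪l, dualityMap q m⟫ := by
  rw [powBregman, inner_sub_left, inner_self_dualityMap hq]
  ring

lemma powBregman_dualityMap (hpq : p.HolderConjugate q) (x l : E) :
    powBregman q (dualityMap p x) l = ‖x‖ ^ p / p + ‖l‖ ^ q / q - ⟪l, x⟫ := by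
  rw [powBregman_eq hpq.symm.ne_zero, dualityMap_dualityMap hpq, norm_dualityMap hpq.lt.ne',
    ← Real.rpow_mul (norm_nonneg x), hpq.sub_one_mul_conj, one_div, hpq.symm.one_sub_inv]
  ring

lemma abs_powBregman_sub_le (hq : 1 < q) (m l : E) :
    |powBregman q m l - (‖l‖ ^ q / q + (1 - 1 / q) * ‖m‖ ^ q)| ≤ ‖m‖ ^ (q - 1) * ‖l‖ := by
  rw [powBregman_eq (by linarith), sub_sub_cancel_left, abs_neg]
  exact abs_inner_dualityMap_le hq.ne' l m

/-- Polarization separates the radial part of the divergence from its angular part. -/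
lemma powBregman_eq_radial_add_angular (hq : 1 < q) (m l : E) :
    powBregman q m l = (‖l‖ ^ q / q - ‖m‖ ^ q / q - ‖m‖ ^ (q - 1) * (‖l‖ - ‖m‖)) +
      1 / 2 * (‖m‖ ^ (q - 2) * (‖l - m‖ ^ 2 - (‖l‖ - ‖m‖) ^ 2)) := by
  have hpow1 : ‖m‖ ^ (q - 1) = ‖m‖ ^ (q - 2) * ‖m‖ := by
    rw [← Real.rpow_add_one' (norm_nonneg m) (by linarith)]; congr 1; ring
  rw [powBregman, dualityMap, real_inner_smul_right, inner_sub_left, real_inner_self_eq_norm_sq,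
    norm_sub_sq_real, hpow1]
  ring

lemma exists_mul_le_powBregman_le_mul (hq : 1 < q) {κ : ℝ} (hκ : 1 ≤ κ) :
    ∃ a A : ℝ, 0 < a ∧ 0 < A ∧ ∀ m l : E, ‖m‖ ≤ κ * ‖l‖ → ‖l‖ ≤ κ * ‖m‖ →
      a * (‖m‖ ^ (q - 2) * ‖l - m‖ ^ 2) ≤ powBregman q m l ∧
        powBregman q m l ≤ A * (‖m‖ ^ (q - 2) * ‖l - m‖ ^ 2) := by
  have hκ0 : 0 < κ := by linarith
  set c := (q - 1) / 2 * (κ ^ |q - 2|)⁻¹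
  set C := (q - 1) / 2 * κ ^ |q - 2|
  refine ⟨min c (1 / 2), max C (1 / 2), by positivity, by positivity, fun m l hml hlm => ?_⟩
  rcases eq_or_ne m 0 with rfl | hm
  · obtain rfl : l = 0 := by simpa using hlm
    simp [powBregman, dualityMap]
  have hm0 : 0 < ‖m‖ := norm_pos_iff.2 hm
  have hl0 : 0 < ‖l‖ := pos_of_mul_pos_right (hm0.trans_le hml) hκ0.le
  obtain ⟨hlower, hupper⟩ := rpow_taylor_remainder_mem_Icc hq hκ hm0 hl0 hml hlm
  set radial := ‖m‖ ^ (q - 2) * (‖l‖ - ‖m‖) ^ 2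
  set angular := ‖m‖ ^ (q - 2) * (‖l - m‖ ^ 2 - (‖l‖ - ‖m‖) ^ 2)
  have hangular : 0 ≤ angular :=
    mul_nonneg (by positivity) (sub_nonneg.2 (sq_le_sq.2 (by simpa using abs_norm_sub_norm_le l m)))
  have hsum : ‖m‖ ^ (q - 2) * ‖l - m‖ ^ 2 = radial + angular := by ring
  rw [powBregman_eq_radial_add_angular hq, hsum, mul_add, mul_add]
  constructor
  · refine add_le_add (le_trans ?_ hlower) ?_ <;> gcongr
    exacts [min_le_left _ _, min_le_right _ _]
  · refine add_le_add (hupper.trans ?_) ?_ <;> gcongr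
    exacts [le_max_left _ _, le_max_right _ _]

lemma norm_rpow_div_le_powBregman_of_norm_le (hq : 1 < q) {m l : E} (h : ‖l‖ ≤ (1 - 1 / q) * ‖m‖) :
    ‖l‖ ^ q / q ≤ powBregman q m l := by
  have hpow : ‖m‖ ^ q = ‖m‖ ^ (q - 1) * ‖m‖ := by
    rw [← Real.rpow_add_one' (norm_nonneg m) (by linarith), sub_add_cancel]
  have hmix : ‖m‖ ^ (q - 1) * ‖l‖ ≤ (1 - 1 / q) * ‖m‖ ^ q :=
    calc ‖m‖ ^ (q - 1) * ‖l‖ ≤ ‖m‖ ^ (q - 1) * ((1 - 1 / q) * ‖m‖) := by gcongr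
      _ = (1 - 1 / q) * ‖m‖ ^ q := by rw [hpow]; ring
  linarith [(abs_le.1 (abs_powBregman_sub_le hq m l)).1]

lemma norm_rpow_div_le_powBregman_of_le_norm_rpow (hq : 1 < q) {m l : E}
    (h : 2 * q * ‖m‖ ^ (q - 1) ≤ ‖l‖ ^ (q - 1)) :
    ‖l‖ ^ q / (2 * q) ≤ powBregman q m l := by
  have hq0 : 0 < q := by linarith
  have hpow : ‖l‖ ^ q = ‖l‖ ^ (q - 1) * ‖l‖ := by
    rw [← Real.rpow_add_one' (norm_nonneg l) (by linarith), sub_add_cancel]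
  have hmix : ‖m‖ ^ (q - 1) * ‖l‖ ≤ ‖l‖ ^ q / (2 * q) := by
    rw [le_div_iff₀ (by positivity), hpow]
    calc _ = 2 * q * ‖m‖ ^ (q - 1) * ‖l‖ := by ring
      _ ≤ _ := by gcongr
  have hm : 0 ≤ (1 - 1 / q) * ‖m‖ ^ q :=
    mul_nonneg (sub_nonneg.2 ((div_le_one hq0).2 hq.le)) (by positivity)
  have hhalf : ‖l‖ ^ q / q = 2 * (‖l‖ ^ q / (2 * q)) := by field_simp
  linarith [(abs_le.1 (abs_powBregman_sub_le hq m l)).1]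

lemma exists_norm_rpow_div_le_powBregman (hq : 1 < q) :
    ∃ κ : ℝ, 1 ≤ κ ∧ ∀ m l : E, κ * ‖l‖ ≤ ‖m‖ ∨ κ * ‖m‖ ≤ ‖l‖ →
      ‖l‖ ^ q / (2 * q) ≤ powBregman q m l := by
  have hq1 : 0 < q - 1 := by linarith
  have hone : 1 ≤ q / (q - 1) := by rw [one_le_div hq1]; linarith
  refine ⟨max (q / (q - 1)) ((2 * q) ^ (q - 1)⁻¹), le_max_of_le_left hone, fun m l h => ?_⟩
  rcases h with h | h
  · have hnear : ‖l‖ ≤ (1 - 1 / q) * ‖m‖ :=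
      calc ‖l‖ = (1 - 1 / q) * (q / (q - 1) * ‖l‖) := by field_simp
        _ ≤ (1 - 1 / q) * ‖m‖ := by
          have : 0 ≤ 1 - 1 / q := by rw [sub_nonneg, div_le_one (by linarith)]; exact hq.le
          gcongr
          refine le_trans ?_ h
          gcongr
          exact le_max_left _ _
    refine le_trans ?_ (norm_rpow_div_le_powBregman_of_norm_le hq hnear)
    gcongr
    linarith
  · refine norm_rpow_div_le_powBregman_of_le_norm_rpow hq ?_
    calc 2 * q * ‖m‖ ^ (q - 1) = ((2 * q) ^ (q - 1)⁻¹ * ‖m‖) ^ (q - 1) := by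
          rw [Real.mul_rpow (by positivity) (norm_nonneg m),
            Real.rpow_inv_rpow (by positivity) hq1.ne']
      _ ≤ ‖l‖ ^ (q - 1) := by
        gcongr
        refine le_trans ?_ h
        gcongr
        exact le_max_right _ _

end Bregman

section Haar

lemma measureReal_closedBall_pos {X : Type*} [PseudoMetricSpace X] [ProperSpace X]
    [MeasurableSpace X] (μ : Measure X) [μ.IsOpenPosMeasure] [IsFiniteMeasureOnCompacts μ] (x : X)
    {r : ℝ} (hr : 0 < r) : 0 < μ.real (Metric.closedBall x r) :=
  ENNReal.toReal_pos (Metric.measure_closedBall_pos μ x hr).ne' measure_closedBall_lt_top.ne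

variable {E : Type*} [NormedAddCommGroup E] [NormedSpace ℝ E] [FiniteDimensional ℝ E]
  [MeasurableSpace E] [BorelSpace E] {μ : Measure E} [μ.IsAddHaarMeasure]

lemma integrable_norm_rpow_mul_exp_neg_mul_norm_rpow [Nontrivial E] {α b q : ℝ}
    (hα : -(finrank ℝ E : ℝ) < α) (hb : 0 < b) (hq : 0 < q) :
    Integrable (fun l : E => ‖l‖ ^ α * Real.exp (-b * ‖l‖ ^ q)) μ := by
  rw [integrable_fun_norm_addHaar μ (f := fun t : ℝ => t ^ α * Real.exp (-b * t ^ q))]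
  have hdim : ((finrank ℝ E - 1 : ℕ) : ℝ) = finrank ℝ E - 1 := Nat.cast_pred finrank_pos
  refine (integrableOn_rpow_mul_exp_neg_mul_rpow (s := (finrank ℝ E - 1 : ℕ) + α)
    (by rw [hdim]; linarith) hq hb).congr_fun (fun t (ht : 0 < t) => ?_) measurableSet_Ioi
  simp only [smul_eq_mul]
  rw [Real.rpow_add ht, Real.rpow_natCast, mul_assoc]

lemma integrable_and_integral_pow_mul_comp_smul_sub_le [Nontrivial E] {f : E → ℝ}
    (hf : Integrable f μ) (hf0 : 0 ≤ f) {r : ℝ} (hr : 0 ≤ r) (m : E) :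
    Integrable (fun l => r ^ finrank ℝ E * f (r • (l - m))) μ ∧
      ∫ l, r ^ finrank ℝ E * f (r • (l - m)) ∂μ ≤ ∫ l, f l ∂μ := by
  rcases hr.eq_or_lt with rfl | hr0
  · simpa [finrank_pos.ne'] using integral_nonneg hf0
  refine ⟨((hf.comp_smul hr0.ne').comp_sub_right m).const_mul _, le_of_eq ?_⟩
  rw [integral_const_mul, integral_sub_right_eq_self (fun l => f (r • l)) m,
    Measure.integral_comp_smul_of_nonneg μ f r (hR := hr), smul_eq_mul,
    mul_inv_cancel_left₀ (by positivity)]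

lemma mul_pow_mul_measureReal_le_integral {f : E → ℝ} (hf : Integrable f μ) (hf0 : 0 ≤ f) {v : E}
    {r k : ℝ} (hr : 0 ≤ r) (h : ∀ l ∈ Metric.closedBall v r, k ≤ f l) :
    k * (r ^ finrank ℝ E * μ.real (Metric.closedBall 0 1)) ≤ ∫ l, f l ∂μ := by
  rw [← Measure.addHaar_real_closedBall' μ v hr]
  exact (setIntegral_ge_of_const_le_real Metric.isClosed_closedBall.measurableSet
    measure_closedBall_lt_top.ne h hf.integrableOn).trans
    (setIntegral_le_integral hf (.of_forall hf0))

end Haar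

section Laplace

variable {E : Type*} [NormedAddCommGroup E] [InnerProductSpace ℝ E] {p q : ℝ}

/-- The integrand of the theorem at `x = dualityMap q m`, divided by `exp (‖x‖ ^ p / p)`, as a
function of `l`. -/
noncomputable def laplaceWeight (q : ℝ) (m l : E) : ℝ :=
  Real.exp (-powBregman q m l) * ‖l‖ ^ (finrank ℝ E * (q - 2) / 2)

lemma laplaceWeight_nonneg (q : ℝ) (m : E) : 0 ≤ laplaceWeight q m := fun l => by
  unfold laplaceWeight; positivity

lemma exp_inner_sub_mul_eq (hpq : p.HolderConjugate q) (x l : E) :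
    Real.exp (⟪l, x⟫ - ‖l‖ ^ q / q) * ‖l‖ ^ (finrank ℝ E * (q - 2) / 2) =
      Real.exp (‖x‖ ^ p / p) * laplaceWeight q (dualityMap p x) l := by
  rw [laplaceWeight, powBregman_dualityMap hpq, ← mul_assoc, ← Real.exp_add]
  congr 2; ring

lemma exists_laplaceWeight_le (hq : 1 < q) :
    ∃ a C : ℝ, 0 < a ∧ 0 ≤ C ∧ ∀ m l : E, laplaceWeight q m l ≤
      C * ((‖m‖ ^ ((q - 2) / 2)) ^ finrank ℝ E *
        Real.exp (-a * ‖‖m‖ ^ ((q - 2) / 2) • (l - m)‖ ^ 2)) +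
      ‖l‖ ^ (finrank ℝ E * (q - 2) / 2) * Real.exp (-(1 / (2 * q)) * ‖l‖ ^ q) := by
  obtain ⟨κ, hκ, hfar⟩ := exists_norm_rpow_div_le_powBregman (E := E) hq
  obtain ⟨a, _, ha, _, hnear⟩ := exists_mul_le_powBregman_le_mul (E := E) hq hκ
  have hκ0 : 0 < κ := by linarith
  refine ⟨a, κ ^ |finrank ℝ E * (q - 2) / 2|, ha, by positivity, fun m l => ?_⟩
  rw [← rpow_natCast_mul_div_two (norm_nonneg m), norm_rpow_div_two_smul_sq (norm_nonneg m),
    laplaceWeight]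
  set α := finrank ℝ E * (q - 2) / 2
  by_cases h : κ * ‖l‖ ≤ ‖m‖ ∨ κ * ‖m‖ ≤ ‖l‖
  · refine le_add_of_nonneg_of_le (by positivity) ?_
    rw [mul_comm]
    gcongr
    calc -powBregman q m l ≤ -(‖l‖ ^ q / (2 * q)) := neg_le_neg (hfar m l h)
      _ = -(1 / (2 * q)) * ‖l‖ ^ q := by ring
  · push Not at h
    refine le_add_of_le_of_nonneg ?_ (by positivity)
    have hm0 : 0 < ‖m‖ := pos_of_mul_pos_right ((norm_nonneg l).trans_lt h.2) hκ0.le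
    have hl0 : 0 < ‖l‖ := pos_of_mul_pos_right ((norm_nonneg m).trans_lt h.1) hκ0.le
    have hweight := rpow_le_rpow_abs_mul_rpow α hm0 hl0 h.1.le h.2.le
    calc Real.exp (-powBregman q m l) * ‖l‖ ^ α
        ≤ Real.exp (-a * (‖m‖ ^ (q - 2) * ‖l - m‖ ^ 2)) * (κ ^ |α| * ‖m‖ ^ α) := by
          gcongr
          linarith [(hnear m l h.1.le h.2.le).1]
      _ = κ ^ |α| * (‖m‖ ^ α * Real.exp (-a * (‖m‖ ^ (q - 2) * ‖l - m‖ ^ 2))) := by ring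

lemma exists_pow_le_laplaceWeight (hq : 1 < q) :
    ∃ k : ℝ, 0 < k ∧ ∀ m : E, 1 ≤ ‖m‖ →
      ∀ l ∈ Metric.closedBall m (2⁻¹ * (‖m‖ ^ ((q - 2) / 2))⁻¹),
        k * (‖m‖ ^ ((q - 2) / 2)) ^ finrank ℝ E ≤ laplaceWeight q m l := by
  obtain ⟨_, A, _, hA, hnear⟩ := exists_mul_le_powBregman_le_mul (E := E) hq one_le_two
  set α := finrank ℝ E * (q - 2) / 2
  refine ⟨Real.exp (-A) * (2 ^ |α|)⁻¹, by positivity, fun m hm l hl => ?_⟩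
  have hm0 : 0 < ‖m‖ := by linarith
  set r := ‖m‖ ^ ((q - 2) / 2) with hr
  have hr0 : 0 < r := by positivity
  have hscale : r⁻¹ ≤ ‖m‖ := by
    rw [inv_le_iff_one_le_mul₀ hr0, mul_comm, hr, ← Real.rpow_add_one hm0.ne']
    exact Real.one_le_rpow hm (by linarith)
  rw [mem_closedBall_iff_norm] at hl
  have hml : ‖m‖ ≤ 2 * ‖l‖ := by linarith [norm_le_norm_add_norm_sub l m]
  have hlm : ‖l‖ ≤ 2 * ‖m‖ := by linarith [norm_le_norm_add_norm_sub' l m]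
  have hquad : ‖m‖ ^ (q - 2) * ‖l - m‖ ^ 2 ≤ 1 := by
    rw [← norm_rpow_div_two_smul_sq hm0.le, ← hr, norm_smul, Real.norm_of_nonneg hr0.le]
    refine pow_le_one₀ (by positivity) ?_
    calc r * ‖l - m‖ ≤ r * (2⁻¹ * r⁻¹) := by gcongr
      _ ≤ 1 := by field_simp; norm_num
  have hD : powBregman q m l ≤ A :=
    (hnear m l hml hlm).2.trans (mul_le_of_le_one_right hA.le hquad)
  have hweight : (2 ^ |α|)⁻¹ * r ^ finrank ℝ E ≤ ‖l‖ ^ α := by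
    rw [hr, ← rpow_natCast_mul_div_two hm0.le, inv_mul_le_iff₀ (by positivity)]
    exact rpow_le_rpow_abs_mul_rpow α (by linarith) hm0 hlm hml
  rw [mul_assoc, laplaceWeight]
  gcongr

variable [FiniteDimensional ℝ E] [Nontrivial E] [MeasurableSpace E] [BorelSpace E]
  {μ : Measure E} [μ.IsAddHaarMeasure]

lemma exists_integrable_and_integral_laplaceWeight_le (hq : 1 < q) :
    ∃ C : ℝ, ∀ m : E, Integrable (laplaceWeight q m) μ ∧ ∫ l, laplaceWeight q m l ∂μ ≤ C := by
  obtain ⟨a, C, ha, hC, hle⟩ := exists_laplaceWeight_le (E := E) hq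
  have hdim : 0 < (finrank ℝ E : ℝ) := Nat.cast_pos.2 finrank_pos
  have hgauss : Integrable (fun l : E => Real.exp (-a * ‖l‖ ^ 2)) μ := by
    simpa using integrable_norm_rpow_mul_exp_neg_mul_norm_rpow (μ := μ) (α := 0) (q := 2)
      (by linarith) ha two_pos
  have htail := integrable_norm_rpow_mul_exp_neg_mul_norm_rpow (μ := μ)
    (α := finrank ℝ E * (q - 2) / 2) (b := 1 / (2 * q)) (q := q) (by nlinarith) (by positivity)
    (by linarith)
  refine ⟨C * ∫ l, Real.exp (-a * ‖l‖ ^ 2) ∂μ + ∫ l, ‖l‖ ^ (finrank ℝ E * (q - 2) / 2) *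
    Real.exp (-(1 / (2 * q)) * ‖l‖ ^ q) ∂μ, fun m => ?_⟩
  obtain ⟨hpeak, hpeak_le⟩ := integrable_and_integral_pow_mul_comp_smul_sub_le hgauss
    (fun l => by positivity) (r := ‖m‖ ^ ((q - 2) / 2)) (by positivity) m
  have hmajorant := (hpeak.const_mul C).add htail
  have hint : Integrable (laplaceWeight q m) μ := by
    refine hmajorant.mono' (Measurable.aestronglyMeasurable ?_) (.of_forall fun l => ?_)
    · unfold laplaceWeight powBregman
      fun_prop
    · rw [Real.norm_of_nonneg (laplaceWeight_nonneg q m l)]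
      exact hle m l
  refine ⟨hint, (integral_mono hint hmajorant (hle m)).trans ?_⟩
  rw [integral_add' (hpeak.const_mul C) htail, integral_const_mul]
  gcongr

/-- The ball around `m` at the Gaussian scale `r⁻¹` suffices: the weight `‖m‖ ^ α = r ^ n`
compensates its volume. -/
lemma exists_pos_le_integral_laplaceWeight_of_one_le_norm (hq : 1 < q) :
    ∃ k : ℝ, 0 < k ∧ ∀ m : E, 1 ≤ ‖m‖ → k ≤ ∫ l, laplaceWeight q m l ∂μ := by
  obtain ⟨k, hk, hball⟩ := exists_pow_le_laplaceWeight (E := E) hq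
  obtain ⟨_, hint⟩ := exists_integrable_and_integral_laplaceWeight_le (μ := μ) hq
  have hV := measureReal_closedBall_pos μ (0 : E) one_pos
  refine ⟨k * 2⁻¹ ^ finrank ℝ E * μ.real (Metric.closedBall (0 : E) 1), by positivity,
    fun m hm => ?_⟩
  refine le_of_eq_of_le ?_ (mul_pow_mul_measureReal_le_integral (hint m).1
    (laplaceWeight_nonneg q m) (by positivity) (hball m hm))
  rw [mul_pow, inv_pow (‖m‖ ^ _)]
  field_simp

/-- Any fixed ball avoiding the origin suffices. -/
lemma exists_pos_le_integral_laplaceWeight_of_norm_le_one (hq : 1 < q) :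
    ∃ k : ℝ, 0 < k ∧ ∀ m : E, ‖m‖ ≤ 1 → k ≤ ∫ l, laplaceWeight q m l ∂μ := by
  obtain ⟨_, hint⟩ := exists_integrable_and_integral_laplaceWeight_le (μ := μ) hq
  obtain ⟨v, hv⟩ := exists_norm_eq E (c := 2) zero_le_two
  have hV := measureReal_closedBall_pos μ (0 : E) one_pos
  set α := finrank ℝ E * (q - 2) / 2
  refine ⟨Real.exp (-(3 ^ q / q + 1 + 3)) * (3 ^ |α|)⁻¹ *
    (1 ^ finrank ℝ E * μ.real (Metric.closedBall (0 : E) 1)), by positivity, fun m hm => ?_⟩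
  refine mul_pow_mul_measureReal_le_integral (v := v) (hint m).1 (laplaceWeight_nonneg q m)
    zero_le_one fun l hl => ?_
  rw [mem_closedBall_iff_norm] at hl
  have hl3 : ‖l‖ ≤ 3 := by linarith [norm_le_norm_add_norm_sub' l v]
  have hl1 : 1 ≤ ‖l‖ := by linarith [norm_le_norm_add_norm_sub l v]
  have hD : powBregman q m l ≤ 3 ^ q / q + 1 + 3 := by
    have hlq : ‖l‖ ^ q / q ≤ 3 ^ q / q := by gcongr
    have hmq : (1 - 1 / q) * ‖m‖ ^ q ≤ 1 :=
      mul_le_one₀ (sub_le_self 1 (by positivity)) (by positivity)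
        (Real.rpow_le_one (norm_nonneg m) hm (by linarith))
    have hmix : ‖m‖ ^ (q - 1) * ‖l‖ ≤ 1 * 3 := by
      gcongr
      exact Real.rpow_le_one (norm_nonneg m) hm (by linarith)
    linarith [(abs_le.1 (abs_powBregman_sub_le hq m l)).2]
  have hweight : (3 ^ |α|)⁻¹ ≤ ‖l‖ ^ α := by
    rw [inv_le_iff_one_le_mul₀' (by positivity)]
    simpa using rpow_le_rpow_abs_mul_rpow (κ := 3) α (by linarith) one_pos (by linarith)
      (by linarith)
  unfold laplaceWeight
  gcongr

lemma exists_pos_le_integral_laplaceWeight (hq : 1 < q) :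
    ∃ k : ℝ, 0 < k ∧ ∀ m : E, k ≤ ∫ l, laplaceWeight q m l ∂μ := by
  obtain ⟨k₁, hk₁, hlarge⟩ := exists_pos_le_integral_laplaceWeight_of_one_le_norm (μ := μ) hq
  obtain ⟨k₂, hk₂, hsmall⟩ := exists_pos_le_integral_laplaceWeight_of_norm_le_one (μ := μ) hq
  exact ⟨min k₁ k₂, lt_min hk₁ hk₂, fun m => (le_total 1 ‖m‖).elim
    (fun hm => (min_le_left _ _).trans (hlarge m hm))
    fun hm => (min_le_right _ _).trans (hsmall m hm)⟩

theorem exp_weight_average_comparison_general (μ : Measure E) [μ.IsAddHaarMeasure]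
    (hpq : p.HolderConjugate q) :
    ∃ c : ℝ, 1 ≤ c ∧ ∀ x : E,
      1 / c * Real.exp (‖x‖ ^ p / p) ≤
        ∫ l, Real.exp (⟪l, x⟫ - ‖l‖ ^ q / q) * ‖l‖ ^ (finrank ℝ E * (q - 2) / 2) ∂μ ∧
      ∫ l, Real.exp (⟪l, x⟫ - ‖l‖ ^ q / q) * ‖l‖ ^ (finrank ℝ E * (q - 2) / 2) ∂μ ≤
        c * Real.exp (‖x‖ ^ p / p) := by
  obtain ⟨C, hC⟩ := exists_integrable_and_integral_laplaceWeight_le (μ := μ) hpq.symm.lt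
  obtain ⟨k, hk, hkC⟩ := exists_pos_le_integral_laplaceWeight (μ := μ) hpq.symm.lt
  refine ⟨max 1 (max C k⁻¹), le_max_left _ _, fun x => ?_⟩
  simp only [exp_inner_sub_mul_eq hpq, integral_const_mul]
  rw [mul_comm (1 / _), mul_comm (max _ _)]
  constructor <;> gcongr
  · refine le_trans ?_ (hkC (dualityMap p x))
    rw [one_div, inv_le_comm₀ (by positivity) hk]
    exact (le_max_right _ _).trans (le_max_right _ _)
  · exact (hC (dualityMap p x)).2.trans ((le_max_left _ _).trans (le_max_right _ _))

end Laplace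

/-- Appendix estimate: for `1 < p < 2` with conjugate exponent `q = p/(p-1)`, the
superquadratic weight `e^{|x|^p/p}` is comparable to the average
`∫ e^{λ·x - |λ|^q/q}|λ|^{n(q-2)/2} dλ` of linear exponential weights. -/
theorem exp_weight_average_comparison
    (n : ℕ) (hn : 1 ≤ n) (p q : ℝ) (hp1 : 1 < p) (hp2 : p < 2)
    (hq : q = p / (p - 1)) :
    ∃ c : ℝ, 1 ≤ c ∧
      ∀ x : EuclideanSpace ℝ (Fin n),
        (1 / c) * Real.exp (‖x‖ ^ p / p)
            ≤ (∫ l : EuclideanSpace ℝ (Fin n),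
                Real.exp (⟪l, x⟫ - ‖l‖ ^ q / q) * ‖l‖ ^ ((n : ℝ) * (q - 2) / 2)) ∧
          (∫ l : EuclideanSpace ℝ (Fin n),
              Real.exp (⟪l, x⟫ - ‖l‖ ^ q / q) * ‖l‖ ^ ((n : ℝ) * (q - 2) / 2))
            ≤ c * Real.exp (‖x‖ ^ p / p) := by
  have : NeZero n := ⟨by lia⟩
  simpa only [finrank_euclideanSpace_fin] using exp_weight_average_comparison_general
    (E := EuclideanSpace ℝ (Fin n)) volume ((Real.holderConjugate_iff_eq_conjExponent hp1).2 hq)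
end

section
/- Let n ≥ 2 be an integer. There exists a constant c ≥ 1, depending only on n, such that for every μ > 1, (1/c) e^{μ} μ^{−(n−1)/2} ≤ ∫₀^π e^{μ cos θ} (sin θ)^{n−2} dθ ≤ c e^{μ} μ^{−(n−1)/2}. -/
open MeasureTheory Filter Set
open scoped ENNReal

/-!
The mass of the integral sits at angles of size `μ ^ (-1/2)`. Reflecting `θ ↦ π - θ` bounds the
integral by twice its part over `[0, π/2]`, where `sin θ` is comparable to `θ` and
`cos θ ≤ 1 - (2/π²) θ²`; this leaves a Gaussian moment of order `μ ^ (-(s+1)/2)`, `s` being the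
exponent of the sine. Conversely, on `[0, μ ^ (-1/2)]` one has `μ cos θ ≥ μ - 1/2`, and
`∫ θ ^ s` over that interval is again of order `μ ^ (-(s+1)/2)`.
-/

section

open Real

variable {s μ : ℝ}

lemma min_one_rpow_mul_rpow_le_rpow {k x y : ℝ} (hk : 0 < k) (hx : 0 < x) (hkxy : k * x ≤ y)
    (hyx : y ≤ x) (s : ℝ) : min 1 (k ^ s) * x ^ s ≤ y ^ s := by
  have hkx : 0 < k * x := mul_pos hk hx
  rcases le_total 0 s with hs | hs
  · calc min 1 (k ^ s) * x ^ s ≤ k ^ s * x ^ s := by gcongr; exact min_le_right _ _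
      _ = (k * x) ^ s := (mul_rpow hk.le hx.le).symm
      _ ≤ y ^ s := rpow_le_rpow hkx.le hkxy hs
  · calc min 1 (k ^ s) * x ^ s ≤ 1 * x ^ s := by gcongr; exact min_le_left _ _
      _ = x ^ s := one_mul _
      _ ≤ y ^ s := rpow_le_rpow_of_nonpos (hkx.trans_le hkxy) hyx hs

lemma rpow_le_max_one_rpow_mul_rpow {k x y : ℝ} (hk : 0 < k) (hx : 0 < x) (hkxy : k * x ≤ y)
    (hyx : y ≤ x) (s : ℝ) : y ^ s ≤ max 1 (k ^ s) * x ^ s := by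
  have hkx : 0 < k * x := mul_pos hk hx
  rcases le_total 0 s with hs | hs
  · calc y ^ s ≤ x ^ s := rpow_le_rpow (hkx.le.trans hkxy) hyx hs
      _ = 1 * x ^ s := (one_mul _).symm
      _ ≤ max 1 (k ^ s) * x ^ s := by gcongr; exact le_max_left _ _
  · calc y ^ s ≤ (k * x) ^ s := rpow_le_rpow_of_nonpos hkx hkxy hs
      _ = k ^ s * x ^ s := mul_rpow hk.le hx.le
      _ ≤ max 1 (k ^ s) * x ^ s := by gcongr; exact le_max_right _ _

lemma min_one_rpow_mul_rpow_le_sin_rpow {θ : ℝ} (hθ : 0 < θ) (hθ' : θ ≤ π / 2) (s : ℝ) :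
    min 1 ((2 / π) ^ s) * θ ^ s ≤ sin θ ^ s :=
  min_one_rpow_mul_rpow_le_rpow (by positivity) hθ (mul_le_sin hθ.le hθ') (sin_le hθ.le) s

lemma sin_rpow_le_max_one_rpow_mul_rpow {θ : ℝ} (hθ : 0 < θ) (hθ' : θ ≤ π / 2) (s : ℝ) :
    sin θ ^ s ≤ max 1 ((2 / π) ^ s) * θ ^ s :=
  rpow_le_max_one_rpow_mul_rpow (by positivity) hθ (mul_le_sin hθ.le hθ') (sin_le hθ.le) s

lemma intervalIntegrable_sin_rpow (hs : -1 < s) :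
    IntervalIntegrable (fun θ ↦ sin θ ^ s) volume 0 π := by
  have hleft : IntervalIntegrable (fun θ ↦ sin θ ^ s) volume 0 (π / 2) := by
    refine ((intervalIntegral.intervalIntegrable_rpow' hs).const_mul
      (max 1 ((2 / π) ^ s))).mono_fun' (measurable_sin.pow_const s).aestronglyMeasurable ?_
    rw [uIoc_of_le pi_div_two_pos.le]
    filter_upwards [self_mem_ae_restrict measurableSet_Ioc] with θ hθ
    have hsin : 0 ≤ sin θ := sin_nonneg_of_nonneg_of_le_pi hθ.1.le (by linarith [hθ.2, pi_pos])
    rw [norm_of_nonneg (rpow_nonneg hsin s)]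
    exact sin_rpow_le_max_one_rpow_mul_rpow hθ.1 hθ.2 s
  have hright : IntervalIntegrable (fun θ ↦ sin θ ^ s) volume (π / 2) π := by
    simpa only [sin_pi_sub, sub_zero, sub_half] using (hleft.comp_sub_left π).symm
  exact hleft.trans hright

lemma intervalIntegrable_exp_mul_cos_mul_sin_rpow (hs : -1 < s) (μ : ℝ) :
    IntervalIntegrable (fun θ ↦ exp (μ * cos θ) * sin θ ^ s) volume 0 π :=
  (intervalIntegrable_sin_rpow hs).continuousOn_mul (by fun_prop)

lemma integral_le_two_mul_integral_half {f : ℝ → ℝ} {b : ℝ} (hb : 0 ≤ b)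
    (hf : IntervalIntegrable f volume 0 b) (hfb : ∀ x ∈ Ioo 0 (b / 2), f (b - x) ≤ f x) :
    ∫ x in 0..b, f x ≤ 2 * ∫ x in 0..b / 2, f x := by
  have hmid : b / 2 ∈ uIcc 0 b := mem_uIcc_of_le (by positivity) (half_le_self hb)
  have hleft : IntervalIntegrable f volume 0 (b / 2) :=
    hf.mono_set (uIcc_subset_uIcc_left hmid)
  have hright : IntervalIntegrable f volume (b / 2) b :=
    hf.mono_set (uIcc_subset_uIcc_right hmid)
  have hreflect : IntervalIntegrable (fun x ↦ f (b - x)) volume 0 (b / 2) := by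
    simpa only [sub_self, sub_half] using (hright.comp_sub_left b).symm
  calc ∫ x in 0..b, f x = (∫ x in 0..b / 2, f x) + ∫ x in b / 2..b, f x :=
        (intervalIntegral.integral_add_adjacent_intervals hleft hright).symm
    _ = (∫ x in 0..b / 2, f x) + ∫ x in 0..b / 2, f (b - x) := by
        rw [intervalIntegral.integral_comp_sub_left, sub_half, sub_zero]
    _ ≤ (∫ x in 0..b / 2, f x) + ∫ x in 0..b / 2, f x := by
        gcongr
        exact intervalIntegral.integral_mono_on_of_le_Ioo (by positivity) hreflect hleft hfb
    _ = 2 * ∫ x in 0..b / 2, f x := (two_mul _).symm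

lemma integral_exp_mul_cos_mul_sin_rpow_le_two_mul (hs : -1 < s) (hμ : 0 ≤ μ) :
    ∫ θ in 0..π, exp (μ * cos θ) * sin θ ^ s
      ≤ 2 * ∫ θ in 0..π / 2, exp (μ * cos θ) * sin θ ^ s := by
  refine integral_le_two_mul_integral_half pi_nonneg
    (intervalIntegrable_exp_mul_cos_mul_sin_rpow hs μ) fun θ hθ ↦ ?_
  have hcos : 0 ≤ cos θ :=
    cos_nonneg_of_neg_pi_div_two_le_of_le (by linarith [hθ.1, pi_pos]) hθ.2.le
  have hsin : 0 ≤ sin θ :=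
    sin_nonneg_of_nonneg_of_le_pi hθ.1.le (by linarith [hθ.2, pi_pos])
  rw [cos_pi_sub, sin_pi_sub]
  gcongr
  linarith

lemma exp_mul_cos_le {θ : ℝ} (hμ : 0 ≤ μ) (hθ : |θ| ≤ π) :
    exp (μ * cos θ) ≤ exp μ * exp (-(2 / π ^ 2 * μ) * θ ^ 2) := by
  rw [← exp_add, exp_le_exp]
  calc μ * cos θ ≤ μ * (1 - 2 / π ^ 2 * θ ^ 2) := by gcongr; exact cos_le_one_sub_mul_cos_sq hθ
    _ = μ + -(2 / π ^ 2 * μ) * θ ^ 2 := by ring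

lemma integral_rpow_mul_exp_neg_mul_sq {b : ℝ} (hb : 0 < b) (hs : -1 < s) :
    ∫ x in Ioi (0 : ℝ), x ^ s * exp (-b * x ^ 2)
      = b ^ (-(s + 1) / 2) * (1 / 2) * Gamma ((s + 1) / 2) := by
  simpa only [rpow_two] using integral_rpow_mul_exp_neg_mul_rpow two_pos hs hb

lemma intervalIntegral_le_setIntegral_Ioi {ν : Measure ℝ} {f g : ℝ → ℝ} {a b : ℝ} (hab : a ≤ b)
    (hf : IntervalIntegrable f ν a b) (hg : IntegrableOn g (Ioi a) ν)
    (hfg : ∀ x ∈ Ioc a b, f x ≤ g x) (hg0 : ∀ x ∈ Ioi b, 0 ≤ g x) :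
    ∫ x in a..b, f x ∂ν ≤ ∫ x in Ioi a, g x ∂ν := by
  have hgb : IntegrableOn g (Ioi b) ν := hg.mono_set (Ioi_subset_Ioi hab)
  have hgab : IntegrableOn g (Ioc a b) ν := hg.mono_set Ioc_subset_Ioi_self
  calc ∫ x in a..b, f x ∂ν ≤ ∫ x in a..b, g x ∂ν := by
        simp only [intervalIntegral.integral_of_le hab]
        exact setIntegral_mono_on hf.1 hgab measurableSet_Ioc hfg
    _ ≤ (∫ x in a..b, g x ∂ν) + ∫ x in Ioi b, g x ∂ν :=
        le_add_of_nonneg_right (setIntegral_nonneg measurableSet_Ioi hg0)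
    _ = ∫ x in Ioi a, g x ∂ν := intervalIntegral.integral_interval_add_Ioi hg hgb

lemma exp_mul_cos_mul_sin_rpow_le {θ : ℝ} (hμ : 0 ≤ μ) (hθ : 0 < θ) (hθ' : θ ≤ π / 2) (s : ℝ) :
    exp (μ * cos θ) * sin θ ^ s
      ≤ max 1 ((2 / π) ^ s) * exp μ * (θ ^ s * exp (-(2 / π ^ 2 * μ) * θ ^ 2)) := by
  have hθπ : θ ≤ π := hθ'.trans (half_le_self pi_nonneg)
  have hsin : 0 ≤ sin θ := sin_nonneg_of_nonneg_of_le_pi hθ.le hθπ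
  calc exp (μ * cos θ) * sin θ ^ s
      ≤ exp μ * exp (-(2 / π ^ 2 * μ) * θ ^ 2) * (max 1 ((2 / π) ^ s) * θ ^ s) := by
        gcongr
        · exact exp_mul_cos_le hμ (by rwa [abs_of_pos hθ])
        · exact sin_rpow_le_max_one_rpow_mul_rpow hθ hθ' s
    _ = max 1 ((2 / π) ^ s) * exp μ * (θ ^ s * exp (-(2 / π ^ 2 * μ) * θ ^ 2)) := by ring

lemma integral_half_exp_mul_cos_mul_sin_rpow_le (hs : -1 < s) (hμ : 0 < μ) :
    ∫ θ in 0..π / 2, exp (μ * cos θ) * sin θ ^ s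
      ≤ max 1 ((2 / π) ^ s) * exp μ
        * ∫ θ in Ioi (0 : ℝ), θ ^ s * exp (-(2 / π ^ 2 * μ) * θ ^ 2) := by
  have hint : IntervalIntegrable (fun θ ↦ exp (μ * cos θ) * sin θ ^ s) volume 0 (π / 2) :=
    (intervalIntegrable_exp_mul_cos_mul_sin_rpow hs μ).mono_set
      (uIcc_subset_uIcc_left (mem_uIcc_of_le pi_div_two_pos.le (half_le_self pi_nonneg)))
  rw [← integral_const_mul]
  refine intervalIntegral_le_setIntegral_Ioi pi_div_two_pos.le hint
    ((integrableOn_rpow_mul_exp_neg_mul_sq (by positivity) hs).const_mul _)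
    (fun θ hθ ↦ exp_mul_cos_mul_sin_rpow_le hμ.le hθ.1 hθ.2 s) fun θ hθ ↦ ?_
  have hθ0 : 0 < θ := pi_div_two_pos.trans hθ
  positivity

lemma integral_exp_mul_cos_mul_sin_rpow_le (hs : -1 < s) (hμ : 0 < μ) :
    ∫ θ in 0..π, exp (μ * cos θ) * sin θ ^ s
      ≤ max 1 ((2 / π) ^ s) * (2 / π ^ 2) ^ (-(s + 1) / 2) * Gamma ((s + 1) / 2)
        * exp μ * μ ^ (-(s + 1) / 2) := by
  have hb : 0 < 2 / π ^ 2 * μ := by positivity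
  calc ∫ θ in 0..π, exp (μ * cos θ) * sin θ ^ s
      ≤ 2 * ∫ θ in 0..π / 2, exp (μ * cos θ) * sin θ ^ s :=
        integral_exp_mul_cos_mul_sin_rpow_le_two_mul hs hμ.le
    _ ≤ 2 * (max 1 ((2 / π) ^ s) * exp μ
          * ∫ θ in Ioi (0 : ℝ), θ ^ s * exp (-(2 / π ^ 2 * μ) * θ ^ 2)) := by
        gcongr
        exact integral_half_exp_mul_cos_mul_sin_rpow_le hs hμ
    _ = max 1 ((2 / π) ^ s) * (2 / π ^ 2) ^ (-(s + 1) / 2) * Gamma ((s + 1) / 2)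
          * exp μ * μ ^ (-(s + 1) / 2) := by
        rw [integral_rpow_mul_exp_neg_mul_sq hb hs, mul_rpow (by positivity) hμ.le]
        ring

lemma mul_rpow_le_integral_exp_mul_cos_mul_sin_rpow {δ : ℝ} (hs : -1 < s) (hμ : 0 ≤ μ)
    (hδ : 0 ≤ δ) (hδ' : δ ≤ π / 2) :
    exp (μ * (1 - δ ^ 2 / 2)) * min 1 ((2 / π) ^ s) * (δ ^ (s + 1) / (s + 1))
      ≤ ∫ θ in 0..π, exp (μ * cos θ) * sin θ ^ s := by
  have hδπ : δ ≤ π := hδ'.trans (half_le_self pi_nonneg)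
  have hint := intervalIntegrable_exp_mul_cos_mul_sin_rpow hs μ
  set K := exp (μ * (1 - δ ^ 2 / 2)) * min 1 ((2 / π) ^ s)
  have hle : ∀ θ ∈ Ioo 0 δ, K * θ ^ s ≤ exp (μ * cos θ) * sin θ ^ s := fun θ hθ ↦ by
    have hθδ : θ ^ 2 ≤ δ ^ 2 := pow_le_pow_left₀ hθ.1.le hθ.2.le 2
    have hcos : 1 - δ ^ 2 / 2 ≤ cos θ := by linarith [one_sub_sq_div_two_le_cos (x := θ)]
    have hsin := min_one_rpow_mul_rpow_le_sin_rpow hθ.1 (hθ.2.le.trans hδ') s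
    have hθ0 : 0 < θ := hθ.1
    rw [mul_assoc]
    gcongr
  calc K * (δ ^ (s + 1) / (s + 1)) = ∫ θ in 0..δ, K * θ ^ s := by
        rw [intervalIntegral.integral_const_mul, integral_rpow (.inl hs),
          zero_rpow (by linarith), sub_zero]
    _ ≤ ∫ θ in 0..δ, exp (μ * cos θ) * sin θ ^ s :=
        intervalIntegral.integral_mono_on_of_le_Ioo hδ
          ((intervalIntegral.intervalIntegrable_rpow' hs).const_mul K)
          (hint.mono_set (uIcc_subset_uIcc_left (mem_uIcc_of_le hδ hδπ))) hle
    _ ≤ ∫ θ in 0..π, exp (μ * cos θ) * sin θ ^ s := by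
        refine intervalIntegral.integral_mono_interval le_rfl hδ hδπ ?_ hint
        filter_upwards [self_mem_ae_restrict measurableSet_Ioc] with θ hθ
        exact mul_nonneg (exp_pos _).le
          (rpow_nonneg (sin_nonneg_of_nonneg_of_le_pi hθ.1.le hθ.2) s)

lemma le_integral_exp_mul_cos_mul_sin_rpow (hs : -1 < s) (hμ : 1 ≤ μ) :
    exp (-1 / 2) * min 1 ((2 / π) ^ s) / (s + 1) * exp μ * μ ^ (-(s + 1) / 2)
      ≤ ∫ θ in 0..π, exp (μ * cos θ) * sin θ ^ s := by
  have hμ0 : 0 < μ := one_pos.trans_le hμ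
  have hδ : μ ^ (-1 / 2 : ℝ) ≤ π / 2 :=
    (rpow_le_one_of_one_le_of_nonpos hμ (by norm_num)).trans one_le_pi_div_two
  have hδsq : μ * (μ ^ (-1 / 2 : ℝ)) ^ 2 = 1 := by
    rw [← rpow_mul_natCast hμ0.le]
    norm_num [rpow_neg_one, hμ0.ne']
  have hδpow : (μ ^ (-1 / 2 : ℝ)) ^ (s + 1) = μ ^ (-(s + 1) / 2) := by
    rw [← rpow_mul hμ0.le]
    ring_nf
  have hexp : μ * (1 - (μ ^ (-1 / 2 : ℝ)) ^ 2 / 2) = -1 / 2 + μ := by linear_combination -hδsq / 2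
  calc exp (-1 / 2) * min 1 ((2 / π) ^ s) / (s + 1) * exp μ * μ ^ (-(s + 1) / 2)
      = exp (μ * (1 - (μ ^ (-1 / 2 : ℝ)) ^ 2 / 2)) * min 1 ((2 / π) ^ s)
          * ((μ ^ (-1 / 2 : ℝ)) ^ (s + 1) / (s + 1)) := by
        rw [hexp, hδpow, exp_add]
        ring
    _ ≤ ∫ θ in 0..π, exp (μ * cos θ) * sin θ ^ s :=
        mul_rpow_le_integral_exp_mul_cos_mul_sin_rpow hs hμ0.le (rpow_nonneg hμ0.le _) hδ

lemma exists_one_le_one_div_le_and_le {A B : ℝ} (hB : 0 < B) :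
    ∃ c : ℝ, 1 ≤ c ∧ 1 / c ≤ B ∧ A ≤ c :=
  ⟨max 1 (max A (1 / B)), le_max_left _ _,
    (one_div_le (lt_max_of_lt_left one_pos) hB).2 (by simp), by simp⟩

theorem spherical_integral_asymptotics_general {s : ℝ} (hs : -1 < s) :
    ∃ c : ℝ, 1 ≤ c ∧
      ∀ μ : ℝ, 1 ≤ μ →
        (1 / c) * exp μ * μ ^ (-(s + 1) / 2) ≤ (∫ θ in 0..π, exp (μ * cos θ) * sin θ ^ s) ∧
          (∫ θ in 0..π, exp (μ * cos θ) * sin θ ^ s) ≤ c * exp μ * μ ^ (-(s + 1) / 2) := by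
  have hB : 0 < exp (-1 / 2) * min 1 ((2 / π) ^ s) / (s + 1) :=
    div_pos (by positivity) (by linarith)
  obtain ⟨c, hc, hcB, hAc⟩ := exists_one_le_one_div_le_and_le hB
    (A := max 1 ((2 / π) ^ s) * (2 / π ^ 2) ^ (-(s + 1) / 2) * Gamma ((s + 1) / 2))
  refine ⟨c, hc, fun μ hμ ↦ ?_⟩
  have hμ0 : 0 < μ := one_pos.trans_le hμ
  constructor
  · refine le_trans ?_ (le_integral_exp_mul_cos_mul_sin_rpow hs hμ)
    gcongr
  · refine (integral_exp_mul_cos_mul_sin_rpow_le hs hμ0).trans ?_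
    gcongr

end

/-- Two-sided asymptotics of the spherical integral `∫₀^π e^{μcosθ}(sinθ)^{n-2}dθ`:
it is comparable to `e^μ μ^{-(n-1)/2}`, uniformly for `μ > 1`. -/
theorem spherical_integral_asymptotics (n : ℕ) (hn : 2 ≤ n) :
    ∃ c : ℝ, 1 ≤ c ∧
      ∀ μ : ℝ, 1 < μ →
        (1 / c) * Real.exp μ * μ ^ (-((n : ℝ) - 1) / 2)
            ≤ (∫ θ in (0:ℝ)..Real.pi, Real.exp (μ * Real.cos θ) * Real.sin θ ^ (n - 2)) ∧
          (∫ θ in (0:ℝ)..Real.pi, Real.exp (μ * Real.cos θ) * Real.sin θ ^ (n - 2))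
            ≤ c * Real.exp μ * μ ^ (-((n : ℝ) - 1) / 2) := by
  have hexp : ((n - 2 : ℕ) : ℝ) + 1 = n - 1 := by push_cast [hn]; ring
  obtain ⟨c, hc, hbounds⟩ := spherical_integral_asymptotics_general (s := (n - 2 : ℕ))
    (neg_one_lt_zero.trans_le (Nat.cast_nonneg _))
  simp only [Real.rpow_natCast, hexp] at hbounds
  exact ⟨c, hc, fun μ hμ ↦ hbounds μ hμ.le⟩
end
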